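/- arXiv:1110.4523 — 2 statements merged into one kernel-verified Lean document; each statement's English description precedes it below -/
import Mathlib

section
/- Let G = (V ∪ {s}, E) be a finite sandpile graph, let W ⊆ V be nonempty with the induced subgraph of G on (V ∪ {s}) \ W connected, and let ξ be a minimal configuration on W. Then there exists a finite set 𝓔 of edges of G, each incident to a vertex of W, such that ν_G[η ∈ R_G : η_W = ξ] = det( K_G(e,f) )_{e,f ∈ 𝓔}. -/
open scoped Classical

namespace Sandpile

/-- A finite sandpile multigraph on vertex set `α` (which plays the role of `V ∪ {s}`),
given by a distinguished sink and symmetric edge multiplicities. -/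
structure Graph (α : Type*) where
  sink : α
  b : α → α → ℕ

namespace Graph

variable {α : Type*} [Fintype α] [DecidableEq α] (G : Graph α)

/-- The non-sink vertices (the set `V`). -/
def VSet : Finset α := Finset.univ.erase G.sink

/-- Degree restricted to a finite set of vertices: `deg_F(x) = ∑_{y ∈ F} b_{xy}`. -/
def degIn (F : Finset α) (x : α) : ℕ := ∑ y ∈ F, G.b x y

/-- Total degree `deg_G(x)`. -/
def deg (x : α) : ℕ := ∑ y, G.b x y

/-- `G` is a genuine finite sandpile graph: symmetric multiplicities, no loops, connected. -/
def IsSandpileGraph : Prop :=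
  (∀ x y, G.b x y = G.b y x) ∧ (∀ x, G.b x x = 0) ∧
    ∀ x y : α, Relation.ReflTransGen (fun u v => 0 < G.b u v) x y

/-- Connectivity of the subgraph induced on the vertex set `S`. -/
def ConnectedOn (S : Set α) : Prop :=
  ∀ x ∈ S, ∀ y ∈ S,
    Relation.ReflTransGen (fun u v => u ∈ S ∧ v ∈ S ∧ 0 < G.b u v) x y

/-- A sandpile is stable if every non-sink vertex carries fewer particles than its degree. -/
def Stable (η : α → ℕ) : Prop := ∀ x ∈ G.VSet, η x < G.deg x

/-- `η` is ample for `F` if some vertex of `F` has at least `deg_F` particles. -/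
def AmpleFor (η : α → ℕ) (F : Finset α) : Prop := ∃ x ∈ F, G.degIn F x ≤ η x

/-- Dhar's burning test: recurrent = stable and ample for every nonempty `F ⊆ V`. -/
def Recurrent (η : α → ℕ) : Prop :=
  G.Stable η ∧ ∀ F ⊆ G.VSet, F.Nonempty → G.AmpleFor η F

/-- Remove one particle at `w` (`η - δ_w`). -/
def SubOne (η : α → ℕ) (w : α) : α → ℕ := fun x => if x = w then η x - 1 else η x

/-- `η` and `ξ` agree on `W` (restriction `η_W = ξ_W`). -/
def EqOn (η ξ : α → ℕ) (W : Finset α) : Prop := ∀ x ∈ W, η x = ξ x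

/-- `ξ` is (generalized) minimal on `W`: it extends to a recurrent sandpile, and no
recurrent extension stays recurrent after removing a particle from a vertex of `W`.
(`η - δ_w ∉ R_G` holds automatically if `η w = 0`, as then `η - δ_w` is not a configuration.) -/
def Minimal (W : Finset α) (ξ : α → ℕ) : Prop :=
  (∃ η, G.Recurrent η ∧ EqOn η ξ W) ∧
    ∀ η, G.Recurrent η → EqOn η ξ W → ∀ w ∈ W, ¬(1 ≤ η w ∧ G.Recurrent (SubOne η w))

/-- `ν_G[P]`: the uniform probability of the event `P` under the uniform measure on
recurrent configurations (configurations are normalized to vanish at the sink). -/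
noncomputable def prob (P : (α → ℕ) → Prop) : ℝ :=
  (Nat.card {η : α → ℕ // η G.sink = 0 ∧ G.Recurrent η ∧ P η} : ℝ) /
    (Nat.card {η : α → ℕ // η G.sink = 0 ∧ G.Recurrent η} : ℝ)

/-- The graph Laplacian with the sink row and column deleted. -/
noncomputable def lapRed :
    Matrix {x : α // x ≠ G.sink} {x : α // x ≠ G.sink} ℝ :=
  Matrix.of fun x y =>
    if (x : α) = (y : α) then (G.deg ↑x : ℝ) else -(G.b ↑x ↑y : ℝ)

/-- `H = (Δ')⁻¹`, extended by `0` on the sink. -/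
noncomputable def Hfun (x y : α) : ℝ :=
  if hx : x = G.sink then 0
  else if hy : y = G.sink then 0
  else (G.lapRed)⁻¹ ⟨x, hx⟩ ⟨y, hy⟩

/-- Oriented edges of the multigraph `G`: an edge from `p.1` to `p.2.1`, with copy
index `p.2.2` (parallel edges are distinct). -/
abbrev OEdge (G : Graph α) : Type _ := {p : α × α × ℕ // p.2.2 < G.b p.1 p.2.1}

/-- `K_G(e,f) = δ_{ef} - Y_G(e,f)` where `Y_G` is the transfer current matrix. -/
noncomputable def Kmat (e f : G.OEdge) : ℝ :=
  (if e = f then 1 else 0) -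
    (G.Hfun e.1.1 f.1.1 - G.Hfun e.1.1 f.1.2.1 - G.Hfun e.1.2.1 f.1.1 +
      G.Hfun e.1.2.1 f.1.2.1)

/-- Unburnt sets of phase one of the burning algorithm based on `Q`:
`U_0 = V`, `U_i = U_{i-1} \ B_i` with `B_i = {x ∈ U_{i-1} \ Q : η x ≥ deg_{U_{i-1}} x}`. -/
def U1 (η : α → ℕ) (Q : Finset α) : ℕ → Finset α
  | 0 => G.VSet
  | i + 1 => (U1 η Q i).filter fun x => x ∈ Q ∨ η x < G.degIn (U1 η Q i) x

/-- The final unburnt set `U^{(1)}_I` of phase one (the sequence `U1` is decreasing,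
hence stabilizes after at most `|α|` steps). -/
def U1lim (η : α → ℕ) (Q : Finset α) : Finset α := G.U1 η Q (Fintype.card α)

/-- Unburnt sets of phase two of the burning algorithm based on `Q`. -/
def U2 (η : α → ℕ) (Q : Finset α) : ℕ → Finset α
  | 0 => G.U1lim η Q
  | i + 1 => (U2 η Q i).filter fun x => η x < G.degIn (U2 η Q i) x

/-- Recurrence in the wired graph `G_W` (note `deg_{G_W}(x) = deg_G(x)` for `x ∈ W`,
and `deg_F` for `F ⊆ W` is the same in `G_W` and `G`). -/
def WiredRecurrent (W : Finset α) (ξ : α → ℕ) : Prop :=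
  (∀ x ∈ W, ξ x < G.deg x) ∧ ∀ F ⊆ W, F.Nonempty → ∃ x ∈ F, G.degIn F x ≤ ξ x

/-- `ξ` is minimal in the wired graph `G_W`. -/
def WiredMinimal (W : Finset α) (ξ : α → ℕ) : Prop :=
  G.WiredRecurrent W ξ ∧ ∀ w ∈ W, ¬(1 ≤ ξ w ∧ G.WiredRecurrent W (SubOne ξ w))

/-- Entry points `E(ξ,W)` of `ξ ∈ R_{G_W}`: vertices burnable at the first step. -/
def entryPoints (W : Finset α) (ξ : α → ℕ) : Finset α :=
  W.filter fun w => G.degIn W w ≤ ξ w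

/-- `x` is burnable given the burnt set `S`: `η(x) ≥ deg_G(x) − ∑_{y ∈ S} b_{xy}`. -/
def Burnable (η : α → ℕ) (S : Finset α) (x : α) : Prop :=
  G.degIn (Finset.univ \ S) x ≤ η x

/-- A burning sequence starting from the burnt set `S`. -/
def IsBurnSeq (η : α → ℕ) : Finset α → List α → Prop
  | _, [] => True
  | S, x :: l => x ∉ S ∧ G.Burnable η S x ∧ IsBurnSeq η (insert x S) l

/-- `B` is a burnt set for `η`: some burning sequence from `{s}` burns exactly `B`. -/
def IsBurntSet (η : α → ℕ) (B : Finset α) : Prop :=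
  ∃ l : List α, G.IsBurnSeq η {G.sink} l ∧ l.toFinset = B

/-- Reachability within the vertex set `S`. -/
def ReachIn (S : Set α) (x y : α) : Prop :=
  Relation.ReflTransGen (fun u v => u ∈ S ∧ v ∈ S ∧ 0 < G.b u v) x y

/-- `C` is a connected component of the subgraph induced on `(V ∪ {s}) \ W`
that does not contain the sink. -/
def IsHoleComp (W C : Finset α) : Prop :=
  C.Nonempty ∧ G.sink ∉ C ∧
    ∀ x ∈ C, ∀ y : α, y ∈ C ↔ y ∉ W ∧ G.ReachIn {a : α | a ∉ W} x y

/-- Adjacency induced by a finite set `t` of (undirected, indexed) edges. -/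
def edgeRel (t : Finset (Sym2 α × ℕ)) (u v : α) : Prop := ∃ k : ℕ, (s(u, v), k) ∈ t

/-- `t` is a spanning tree of the multigraph `G`: it consists of edges of `G`
(parallel edges distinct), it spans (connected), and every edge is a bridge
(equivalently, it is acyclic). -/
def IsSpanningTree (t : Finset (Sym2 α × ℕ)) : Prop :=
  (∀ p ∈ t, ∃ x y : α, p.1 = s(x, y) ∧ p.2 < G.b x y) ∧
  (∀ u v : α, Relation.ReflTransGen (edgeRel t) u v) ∧
  ∀ p ∈ t, ∀ x y : α, p.1 = s(x, y) →
    ¬ Relation.ReflTransGen (edgeRel (t.erase p)) x y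

/-- Adjacency induced by a set of (undirected, indexed) edges. -/
def edgeRelSet (t : Set (Sym2 α × ℕ)) (u v : α) : Prop := ∃ k : ℕ, (s(u, v), k) ∈ t

/-- Set version of `IsSpanningTree`. -/
def IsSpanningTreeSet (t : Set (Sym2 α × ℕ)) : Prop :=
  (∀ p ∈ t, ∃ x y : α, p.1 = s(x, y) ∧ p.2 < G.b x y) ∧
  (∀ u v : α, Relation.ReflTransGen (edgeRelSet t) u v) ∧
  ∀ p ∈ t, ∀ x y : α, p.1 = s(x, y) →
    ¬ Relation.ReflTransGen (edgeRelSet (t \ {p})) x y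

/-- The step at which `x` burns in phase one (0 for the sink; `sInf ∅ = 0` if `x`
never burns in phase one). -/
noncomputable def p1time (η : α → ℕ) (Q : Finset α) (x : α) : ℕ :=
  sInf {i : ℕ | x ∉ G.U1 η Q i}

/-- The step at which `x` burns in phase two. -/
noncomputable def p2time (η : α → ℕ) (Q : Finset α) (x : α) : ℕ :=
  sInf {i : ℕ | x ∉ G.U2 η Q i}

/-- Vertices burnt at step `i` of phase one (`B^{(1)}_0 = {s}`). -/
def B1 (η : α → ℕ) (Q : Finset α) : ℕ → Finset α
  | 0 => {G.sink}
  | i + 1 => G.U1 η Q i \ G.U1 η Q (i + 1)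

/-- Vertices burnt at step `i` of phase two (`B^{(2)}_0` = everything burnt in phase
one, including the sink). -/
def B2 (η : α → ℕ) (Q : Finset α) : ℕ → Finset α
  | 0 => Finset.univ \ G.U1lim η Q
  | i + 1 => G.U2 η Q i \ G.U2 η Q (i + 1)

/-- The set `B^{(p)}_{i-1}` of vertices burnt at the step preceding the step at which
`x` burns (in the appropriate phase). -/
noncomputable def prevBurnt (η : α → ℕ) (Q : Finset α) (x : α) : Finset α :=
  if x ∈ G.U1lim η Q then G.B2 η Q (G.p2time η Q x - 1)
  else G.B1 η Q (G.p1time η Q x - 1)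

/-- The set `D = B^{(p)}_0 ∪ ⋯ ∪ B^{(p)}_{i-1}` of vertices burnt strictly before `x`
in the phase in which `x` burns. -/
noncomputable def burntBefore (η : α → ℕ) (Q : Finset α) (x : α) : Finset α :=
  if x ∈ G.U1lim η Q then Finset.univ \ G.U2 η Q (G.p2time η Q x - 1)
  else Finset.univ \ G.U1 η Q (G.p1time η Q x - 1)

/-- `j = η(x) − deg_G(x) + n_x` with `n_x = ∑_{y ∈ D} b_{xy}`. -/
noncomputable def jX (η : α → ℕ) (Q : Finset α) (x : α) : ℕ :=
  η x + G.degIn (G.burntBefore η Q x) x - G.deg x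

/-- The defining property of the edge `e_x` of the burning bijection based on `Q`:
`e_x` has tail `x`, head burnt at the previous step, and exactly `j` smaller elements
of `P_x` under the given edge order `lt x`. -/
def EdgeSpec (lt : α → G.OEdge → G.OEdge → Prop) (η : α → ℕ) (Q : Finset α)
    (x : α) (e : G.OEdge) : Prop :=
  e.1.1 = x ∧ e.1.2.1 ∈ G.prevBurnt η Q x ∧
    {f : G.OEdge | f.1.1 = x ∧ f.1.2.1 ∈ G.prevBurnt η Q x ∧ lt x f e}.ncard =
      G.jX η Q x

/-- The (oriented) spanning tree `t(η) = {e_x : x ∈ V}` assigned to `η` by the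
burning bijection based on `Q`. -/
def treeOf (lt : α → G.OEdge → G.OEdge → Prop) (η : α → ℕ) (Q : Finset α) :
    Set G.OEdge :=
  {e | ∃ x ∈ G.VSet, G.EdgeSpec lt η Q x e}

/-- Forget the orientation of an oriented edge. -/
def undir (e : G.OEdge) : Sym2 α × ℕ := (s(e.1.1, e.1.2.1), e.1.2.2)

/-- Total burning order: phase-one vertices first (at their phase-one step), then
phase-two vertices. -/
noncomputable def burnOrder (η : α → ℕ) (Q : Finset α) (x : α) : ℕ :=
  if x ∈ G.U1lim η Q then Fintype.card α + 1 + G.p2time η Q x else G.p1time η Q x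

/-- Edge multiplicities of the auxiliary graph `G_W^*` (on vertex set `W ∪ {s}`):
`b*_{xy} = b_{xy}` for `x,y ∈ W`; `b*_{xs} = ∑_{z ∉ W} b_{xz}` for `x ∈ Q` and
`b*_{xs} = 0` for `x ∈ W \ Q`. -/
def bstar (Q W : Finset α) (x y : α) : ℕ :=
  if x ∈ W ∧ y ∈ W then G.b x y
  else if x ∈ W ∧ y = G.sink then
    if x ∈ Q then ∑ z ∈ Finset.univ \ W, G.b x z else 0
  else if y ∈ W ∧ x = G.sink then
    if y ∈ Q then ∑ z ∈ Finset.univ \ W, G.b z y else 0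
  else 0

/-- Recurrence in the auxiliary graph `G_W^*`. -/
def StarRecurrent (Q W : Finset α) (ζ : α → ℕ) : Prop :=
  (∀ x ∈ W, ζ x < ∑ y ∈ insert G.sink W, G.bstar Q W x y) ∧
    ∀ F ⊆ W, F.Nonempty → ∃ x ∈ F, (∑ y ∈ F, G.bstar Q W x y) ≤ ζ x

end Graph

end Sandpile

set_option linter.unusedSectionVars false
namespace Sandpile
namespace Graph
variable {α : Type*} [Fintype α] [DecidableEq α] (G : Graph α)

/-- reduced Laplacian over a commutative ring -/
def lapG (R : Type*) [CommRing R] :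
    Matrix {x : α // x ≠ G.sink} {x : α // x ≠ G.sink} R :=
  Matrix.of fun x y => if (x : α) = (y : α) then (G.deg ↑x : R) else -(G.b ↑x ↑y : R)

/-- extension by zero at the sink -/
def extz {R : Type*} [CommRing R] (f : {x : α // x ≠ G.sink} → R) (x : α) : R :=
  if h : x = G.sink then 0 else f ⟨x, h⟩

lemma extz_sink {R : Type*} [CommRing R] (f : {x : α // x ≠ G.sink} → R) :
    G.extz f G.sink = 0 := by simp [extz]

lemma extz_coe {R : Type*} [CommRing R] (f : {x : α // x ≠ G.sink} → R)
    (x : {x : α // x ≠ G.sink}) : G.extz f x = f x := by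
  simp [extz, x.2]

lemma sum_sub {R : Type*} [CommRing R] (g : α → R) (hg : g G.sink = 0) :
    ∑ y, g y = ∑ y : {x : α // x ≠ G.sink}, g y := by
  rw [← Fintype.sum_subtype_add_sum_subtype (fun x => x ≠ G.sink) g]
  have : ∑ i : {x // ¬ (x ≠ G.sink)}, g i = 0 := by
    apply Finset.sum_eq_zero
    rintro ⟨i, hi⟩ _
    simp only [ne_eq, not_not] at hi
    simp [hi, hg]
  rw [this, add_zero]

lemma lapG_mulVec (hl : ∀ x, G.b x x = 0) {R : Type*} [CommRing R]
    (f : {x : α // x ≠ G.sink} → R) (x : {x : α // x ≠ G.sink}) :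
    (G.lapG R).mulVec f x = ∑ y, (G.b x y : R) * (G.extz f x - G.extz f y) := by
  have h1 : ∑ y, (G.b x y : R) * (G.extz f x - G.extz f y)
      = (G.deg x : R) * f x - ∑ y, (G.b x y : R) * G.extz f y := by
    simp only [mul_sub, Finset.sum_sub_distrib, deg, extz_coe, Nat.cast_sum, Finset.sum_mul]
  have h2 : ∑ y, (G.b x y : R) * G.extz f y
      = ∑ y : {x : α // x ≠ G.sink}, (G.b x y : R) * f y := by
    rw [G.sum_sub _ (by simp [extz_sink])]
    simp [extz_coe]
  rw [h1, h2]
  simp only [Matrix.mulVec, dotProduct, lapG, Matrix.of_apply]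
  have h3 : ∀ y : {x : α // x ≠ G.sink},
      (if (x : α) = y then (G.deg x : R) else -(G.b x y : R)) * f y
      = (if y = x then (G.deg x : R) * f x else 0) - (G.b x y : R) * f y := by
    intro y
    by_cases h : y = x
    · subst h; simp [hl]
    · have : (x : α) ≠ y := fun h' => h (Subtype.ext h'.symm)
      simp [h, this]
  simp [h3, Finset.sum_sub_distrib]

lemma lapG_posDef (hG : G.IsSandpileGraph) : (G.lapG ℝ).PosDef := by
  obtain ⟨hs, hl, hc⟩ := hG
  rw [Matrix.posDef_iff_dotProduct_mulVec]
  constructor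
  · ext x y
    simp only [lapG, Matrix.conjTranspose_apply, Matrix.of_apply, star_trivial]
    by_cases h : (x : α) = y
    · simp [h]
    · simp [h, Ne.symm h, hs]
  · intro f hf
    have key : 2 * (star f ⬝ᵥ ((G.lapG ℝ).mulVec f))
        = ∑ x, ∑ y, (G.b x y : ℝ) * (G.extz f x - G.extz f y) ^ 2 := by
      have e1 : star f ⬝ᵥ ((G.lapG ℝ).mulVec f)
          = ∑ x, ∑ y, (G.b x y : ℝ) * (G.extz f x - G.extz f y) * G.extz f x := by
        rw [G.sum_sub _ (by simp [extz_sink])]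
        simp only [dotProduct, G.lapG_mulVec hl, extz_coe, Pi.star_apply, star_trivial]
        apply Finset.sum_congr rfl
        intro x _
        rw [Finset.mul_sum]
        exact Finset.sum_congr rfl fun y _ => by ring
      have e2 : star f ⬝ᵥ ((G.lapG ℝ).mulVec f)
          = ∑ x, ∑ y, (G.b x y : ℝ) * (G.extz f y - G.extz f x) * G.extz f y := by
        rw [e1, Finset.sum_comm]
        exact Finset.sum_congr rfl fun y _ => Finset.sum_congr rfl fun x _ => by rw [hs]
      rw [two_mul]
      nth_rewrite 1 [e1]
      rw [e2, ← Finset.sum_add_distrib]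
      refine Finset.sum_congr rfl fun y _ => ?_
      rw [← Finset.sum_add_distrib]
      exact Finset.sum_congr rfl fun x _ => by ring
    have nn : ∀ x y, 0 ≤ (G.b x y : ℝ) * (G.extz f x - G.extz f y) ^ 2 := fun x y => by positivity
    have h0 : 0 ≤ ∑ x, ∑ y, (G.b x y : ℝ) * (G.extz f x - G.extz f y) ^ 2 :=
      Finset.sum_nonneg fun x _ => Finset.sum_nonneg fun y _ => nn x y
    rcases h0.lt_or_eq with h | h
    · linarith
    · exfalso
      apply hf
      have hz : ∀ x y, 0 < G.b x y → G.extz f x = G.extz f y := by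
        intro x y hxy
        have := (Finset.sum_eq_zero_iff_of_nonneg
          (fun x _ => Finset.sum_nonneg fun y _ => nn x y)).1 h.symm x (Finset.mem_univ _)
        have := (Finset.sum_eq_zero_iff_of_nonneg (fun y _ => nn x y)).1 this y (Finset.mem_univ _)
        have hb : (G.b x y : ℝ) ≠ 0 := by positivity
        rcases mul_eq_zero.1 this with h | h
        · exact absurd h hb
        · have := pow_eq_zero_iff (two_ne_zero) |>.1 h
          linarith
      funext x
      have : G.extz f x = G.extz f G.sink := by
        have gen : ∀ z, Relation.ReflTransGen (fun u v => 0 < G.b u v) x z →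
            G.extz f x = G.extz f z := by
          intro z hxz
          induction hxz with
          | refl => rfl
          | tail _ h ih => rw [ih, hz _ _ h]
        exact gen _ (hc x G.sink)
      rw [extz_coe, extz_sink] at this
      simpa using this

lemma lapG_map : (G.lapG ℤ).map (Int.cast : ℤ → ℝ) = G.lapG ℝ := by
  ext x y
  simp only [lapG, Matrix.map_apply, Matrix.of_apply]
  split_ifs <;> simp

lemma lapG_det_cast : (((G.lapG ℤ).det : ℤ) : ℝ) = (G.lapG ℝ).det := by
  rw [← lapG_map]
  exact Int.cast_det _

lemma lapG_det_pos (hG : G.IsSandpileGraph) : 0 < (G.lapG ℤ).det := by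
  have := (G.lapG_posDef hG).det_pos
  rw [← lapG_det_cast] at this
  exact_mod_cast this

/-- the superstable configurations -/
def Ss (c : α → ℕ) : Prop :=
  c G.sink = 0 ∧ ∀ F : Finset α, G.sink ∉ F → F.Nonempty → ∃ x ∈ F, c x < G.degIn Fᶜ x

lemma lap_range_index (hG : G.IsSandpileGraph) :
    Nat.card (({x : α // x ≠ G.sink} → ℤ) ⧸ LinearMap.range (G.lapG ℤ).mulVecLin)
      = (G.lapG ℤ).det.natAbs := by
  have hd := (G.lapG_det_pos hG).ne'
  have hinj : Function.Injective (G.lapG ℤ).mulVecLin := by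
    rw [Matrix.coe_mulVecLin]
    exact Matrix.mulVec_injective_of_det_ne_zero hd
  let e := LinearEquiv.ofInjective (G.lapG ℤ).mulVecLin hinj
  have h := Submodule.natAbs_det_equiv (LinearMap.range (G.lapG ℤ).mulVecLin) e
  rw [← h, ← LinearMap.det_toLin']
  congr 2
lemma Ss_unique_aux (hl : ∀ x, G.b x x = 0) {c1 c2 : α → ℕ} (h1 : G.Ss c1)
    (f : {x : α // x ≠ G.sink} → ℤ)
    (h : ∀ x : {x : α // x ≠ G.sink}, (c1 x : ℤ) = c2 x + (G.lapG ℤ).mulVec f x) :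
    ∀ x, G.extz f x ≤ 0 := by
  by_contra hcon
  push Not at hcon
  obtain ⟨x0, hx0⟩ := hcon
  obtain ⟨m, -, hm⟩ := Finset.exists_max_image Finset.univ (G.extz f) ⟨x0, Finset.mem_univ _⟩
  have hmpos : 0 < G.extz f m := lt_of_lt_of_le hx0 (hm _ (Finset.mem_univ _))
  let F : Finset α := Finset.univ.filter fun x => G.extz f x = G.extz f m
  have hsF : G.sink ∉ F := by
    simp only [F, Finset.mem_filter, Finset.mem_univ, true_and, extz_sink]
    exact hmpos.ne
  obtain ⟨x, hxF, hx⟩ := h1.2 F hsF ⟨m, by simp [F]⟩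
  have hxs : x ≠ G.sink := fun h => hsF (h ▸ hxF)
  have e := h ⟨x, hxs⟩
  rw [G.lapG_mulVec hl] at e
  have hxm : G.extz f x = G.extz f m := by simpa [F] using hxF
  have : (G.degIn Fᶜ x : ℤ) ≤ ∑ y, (G.b x y : ℤ) * (G.extz f x - G.extz f y) := by
    rw [degIn, Nat.cast_sum]
    calc ∑ y ∈ Fᶜ, (G.b x y : ℤ) ≤ ∑ y ∈ Fᶜ, (G.b x y : ℤ) * (G.extz f x - G.extz f y) := by
          apply Finset.sum_le_sum
          intro y hy
          have h1 : G.extz f y ≠ G.extz f m := by simpa [F] using hy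
          have h2 := hm y (Finset.mem_univ _)
          have h3 : 1 ≤ G.extz f x - G.extz f y := by
            have := lt_of_le_of_ne h2 h1
            omega
          exact le_mul_of_one_le_right (by positivity) h3
      _ ≤ _ := by
          apply Finset.sum_le_sum_of_subset_of_nonneg (Finset.subset_univ _)
          intro y _ _
          have h2 := hm y (Finset.mem_univ _)
          exact mul_nonneg (by positivity) (by omega)
  simp only at e
  omega

lemma Ss_inj (hl : ∀ x, G.b x x = 0) {c1 c2 : α → ℕ} (h1 : G.Ss c1) (h2 : G.Ss c2)
    (f : {x : α // x ≠ G.sink} → ℤ)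
    (h : ∀ x : {x : α // x ≠ G.sink}, (c1 x : ℤ) - c2 x = (G.lapG ℤ).mulVec f x) : c1 = c2 := by
  have a1 := G.Ss_unique_aux hl (c2 := c2) h1 f (fun x => by linarith [h x])
  have a2 := G.Ss_unique_aux hl (c2 := c1) h2 (-f) (fun x => by
    rw [Matrix.mulVec_neg, Pi.neg_apply]; linarith [h x])
  have hf : f = 0 := by
    funext x
    have b1 := a1 x
    have b2 := a2 x
    rw [extz_coe] at b1 b2
    simp only [Pi.neg_apply, Pi.zero_apply] at *
    omega
  funext x
  by_cases hx : x = G.sink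
  · rw [hx, h1.1, h2.1]
  · have := h ⟨x, hx⟩
    rw [hf, Matrix.mulVec_zero] at this
    simp only [Pi.zero_apply] at this
    omega

lemma lapG_symm (hs : ∀ x y, G.b x y = G.b y x) : (G.lapG ℤ).transpose = G.lapG ℤ := by
  ext x y
  simp only [lapG, Matrix.transpose_apply, Matrix.of_apply]
  by_cases h : (x : α) = y
  · simp [h]
  · simp [h, Ne.symm h, hs y x]

lemma exists_h (hG : G.IsSandpileGraph) : ∃ h : {x : α // x ≠ G.sink} → ℤ,
    (∀ x, 0 ≤ h x) ∧ ∀ x, (G.lapG ℤ).mulVec h x = (G.lapG ℤ).det := by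
  have hD := G.lapG_det_pos hG
  obtain ⟨hs, hl, -⟩ := hG
  refine ⟨(G.lapG ℤ).adjugate.mulVec 1, ?_, ?_⟩
  swap
  · intro x
    rw [Matrix.mulVec_mulVec, Matrix.mul_adjugate, Matrix.smul_mulVec, Matrix.one_mulVec]
    simp
  · have e : ∀ x, (G.lapG ℤ).mulVec ((G.lapG ℤ).adjugate.mulVec 1) x = (G.lapG ℤ).det := by
      intro x
      rw [Matrix.mulVec_mulVec, Matrix.mul_adjugate, Matrix.smul_mulVec, Matrix.one_mulVec]
      simp
    generalize (G.lapG ℤ).adjugate.mulVec 1 = h at e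
    by_contra hcon
    push Not at hcon
    obtain ⟨x0, hx0⟩ := hcon
    obtain ⟨m, -, hm⟩ := Finset.exists_min_image Finset.univ (G.extz h)
      ⟨(x0 : α), Finset.mem_univ _⟩
    have hneg : G.extz h m < 0 :=
      lt_of_le_of_lt (hm x0 (Finset.mem_univ _)) (by rwa [extz_coe])
    have hms : m ≠ G.sink := by
      rintro rfl
      rw [extz_sink] at hneg
      exact absurd hneg (lt_irrefl _)
    have := e ⟨m, hms⟩
    rw [G.lapG_mulVec hl] at this
    have h2 : ∑ y, (G.b m y : ℤ) * (G.extz h m - G.extz h y) ≤ 0 := by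
      apply Finset.sum_nonpos
      intro y _
      have := hm y (Finset.mem_univ _)
      exact mul_nonpos_of_nonneg_of_nonpos (by positivity) (by omega)
    simp only at this
    omega

lemma Ss_exists (hG : G.IsSandpileGraph) (v : {x : α // x ≠ G.sink} → ℤ) :
    ∃ c : α → ℕ, G.Ss c ∧ ∃ f : {x : α // x ≠ G.sink} → ℤ,
      ∀ x : {x : α // x ≠ G.sink}, v x - c x = (G.lapG ℤ).mulVec f x := by
  have hD := G.lapG_det_pos hG
  obtain ⟨h, hnn, hL⟩ := G.exists_h hG
  obtain ⟨hs, hl, -⟩ := hG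
  set L := G.lapG ℤ with hLdef
  obtain ⟨g, hg⟩ : ∃ g, L.mulVec g = L.det • |v| := by
    refine ⟨L.adjugate.mulVec |v|, ?_⟩
    rw [Matrix.mulVec_mulVec, Matrix.mul_adjugate, Matrix.smul_mulVec, Matrix.one_mulVec]
  set c0 := v + L.det • |v| with hc0
  have hc0nn : ∀ x, 0 ≤ c0 x := by
    intro x
    simp only [hc0, Pi.add_apply, Pi.smul_apply, Pi.abs_apply, smul_eq_mul]
    have := neg_abs_le (v x)
    have h2 : |v x| ≤ L.det * |v x| := le_mul_of_one_le_left (abs_nonneg _) hD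
    linarith
  obtain ⟨n, ⟨f, hf0, hfc, hfn⟩, hmax⟩ := Int.exists_greatest_of_bdd
    (P := fun n : ℤ => ∃ f : {x : α // x ≠ G.sink} → ℤ, (∀ x, 0 ≤ f x) ∧
      (∀ x, 0 ≤ c0 x - L.mulVec f x) ∧ ∑ x, f x = n)
    (by
      refine ⟨∑ x, h x * c0 x, ?_⟩
      rintro n ⟨f, hf0, hfc, rfl⟩
      have e1 : ∑ x, L.det * f x = ∑ x, h x * L.mulVec f x := by
        have : ∑ x, L.det * f x = L.mulVec h ⬝ᵥ f := by
          simp [dotProduct, hL]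
        rw [this]
        change _ = h ⬝ᵥ L.mulVec f
        rw [Matrix.dotProduct_mulVec, ← Matrix.mulVec_transpose, hLdef, G.lapG_symm hs]
      have e2 : ∑ x, f x ≤ ∑ x, L.det * f x :=
        Finset.sum_le_sum fun x _ => le_mul_of_one_le_left (hf0 x) hD
      have e3 : ∑ x, h x * L.mulVec f x ≤ ∑ x, h x * c0 x :=
        Finset.sum_le_sum fun x _ => mul_le_mul_of_nonneg_left (by linarith [hfc x]) (hnn x)
      linarith)
    ⟨0, 0, by simp, by simpa using hc0nn, by simp⟩
  refine ⟨fun x => (G.extz (c0 - L.mulVec f) x).toNat, ⟨?_, ?_⟩, f - g, ?_⟩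
  · simp [extz_sink]
  · intro F hsF hF
    by_contra hcon
    push Not at hcon
    let i : {x : α // x ≠ G.sink} → ℤ := fun x => if (x : α) ∈ F then 1 else 0
    have hi : ∀ x, G.extz i x = if x ∈ F then 1 else 0 := by
      intro x
      by_cases hx : x = G.sink
      · subst hx
        simp [extz_sink, hsF]
      · exact G.extz_coe i ⟨x, hx⟩
    have hLi : ∀ x : {x : α // x ≠ G.sink},
        L.mulVec i x = ∑ y, (G.b x y : ℤ) * (G.extz i x - G.extz i y) := G.lapG_mulVec hl i
    have := hmax (∑ x, (f + i) x) ⟨f + i, ?_, ?_, rfl⟩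
    · rw [← hfn] at this
      simp only [Pi.add_apply, Finset.sum_add_distrib] at this
      obtain ⟨x, hx⟩ := hF
      have hpos : 0 < ∑ x, i x := by
        apply Finset.sum_pos'
        · intro y _
          simp only [i]; split_ifs <;> simp
        · exact ⟨⟨x, fun h => hsF (h ▸ hx)⟩, Finset.mem_univ _, by simp [i, hx]⟩
      omega
    · intro x
      have := hf0 x
      simp only [Pi.add_apply, i]
      split_ifs <;> omega
    · intro x
      rw [Matrix.mulVec_add, Pi.add_apply, hLi]
      by_cases hx : (x : α) ∈ F
      · have h1 := hcon x hx
        rw [G.extz_coe] at h1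
        have h2 : ∑ y, (G.b x y : ℤ) * (G.extz i x - G.extz i y) = G.degIn Fᶜ x := by
          rw [degIn, Nat.cast_sum, ← Finset.sum_compl_add_sum F]
          have z : ∑ y ∈ F, (G.b x y : ℤ) * (G.extz i x - G.extz i y) = 0 := by
            apply Finset.sum_eq_zero
            intro y hy
            simp [hi, hx, hy]
          rw [z, add_zero]
          apply Finset.sum_congr rfl
          intro y hy
          have : y ∉ F := by simpa using hy
          simp [hi, hx, this]
        rw [h2]
        have h3 := hfc x
        simp only [Pi.sub_apply] at h1
        omega
      · have h2 : ∑ y, (G.b x y : ℤ) * (G.extz i x - G.extz i y) ≤ 0 := by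
          apply Finset.sum_nonpos
          intro y _
          apply mul_nonpos_of_nonneg_of_nonpos (by positivity)
          simp only [hi, hx, if_false]
          split_ifs <;> simp
        have h3 := hfc x
        omega
  · intro x
    have h3 := hfc x
    have e := congrFun hg x
    simp only [extz_coe, Matrix.mulVec_sub, Pi.sub_apply]
    rw [Int.toNat_of_nonneg h3, e, hc0]
    simp only [Pi.add_apply]
    ring

lemma card_Ss (hG : G.IsSandpileGraph) :
    (Nat.card {c : α → ℕ // G.Ss c} : ℝ) = (G.lapG ℝ).det := by
  have hD := G.lapG_det_pos hG
  have : Nat.card {c : α → ℕ // G.Ss c} = (G.lapG ℤ).det.natAbs := by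
    rw [← G.lap_range_index hG]
    let φ : {c : α → ℕ // G.Ss c} →
        ({x : α // x ≠ G.sink} → ℤ) ⧸ LinearMap.range (G.lapG ℤ).mulVecLin :=
      fun c => Submodule.Quotient.mk (fun x => (c.1 x : ℤ))
    apply Nat.card_eq_of_bijective φ
    constructor
    · rintro ⟨c1, h1⟩ ⟨c2, h2⟩ h
      obtain ⟨f, hf⟩ := (Submodule.Quotient.eq _).1 h
      apply Subtype.ext
      apply G.Ss_inj hG.2.1 h1 h2 f
      intro x
      exact (congrFun hf x).symm
    · intro q
      obtain ⟨v, rfl⟩ := Submodule.Quotient.mk_surjective _ q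
      obtain ⟨c, hc, f, hf⟩ := G.Ss_exists hG v
      refine ⟨⟨c, hc⟩, ?_⟩
      symm
      apply (Submodule.Quotient.eq _).2
      refine ⟨f, ?_⟩
      funext x
      exact (hf x).symm
  rw [this, ← lapG_det_cast]
  rw [Nat.cast_natAbs, abs_of_pos hD]

lemma finite_OEdge : Finite G.OEdge := by
  let φ : G.OEdge → (Σ p : α × α, Fin (G.b p.1 p.2)) :=
    fun e => ⟨(e.1.1, e.1.2.1), ⟨e.1.2.2, e.2⟩⟩
  apply Finite.of_injective φ
  rintro ⟨⟨x, y, k⟩, h⟩ ⟨⟨x', y', k'⟩, h'⟩ he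
  simp only [φ, Sigma.mk.injEq, Prod.mk.injEq] at he
  obtain ⟨⟨rfl, rfl⟩, he⟩ := he
  simp only [heq_eq_eq, Fin.mk.injEq] at he
  subst he
  rfl

lemma sum_edges (b' : α → α → ℕ) (r : α → ℕ) (E : Finset G.OEdge)
    (hE : ∀ e, e ∈ E ↔ r e.1.1 < r e.1.2.1 ∧ b' e.1.1 e.1.2.1 ≤ e.1.2.2)
    (hb : ∀ x y, b' x y ≤ G.b x y) (F : α → α → ℝ) :
    ∑ e : ↥E, F e.1.1.1 e.1.1.2.1 =
      ∑ u, ∑ v, if r u < r v then ((G.b u v : ℝ) - b' u v) * F u v else 0 := by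
  rw [Finset.sum_coe_sort E (fun e => F e.1.1 e.1.2.1)]
  rw [← Finset.sum_fiberwise E (fun e => ((e.1.1, e.1.2.1) : α × α))]
  rw [Fintype.sum_prod_type]
  refine Finset.sum_congr rfl fun u _ => Finset.sum_congr rfl fun v _ => ?_
  have h1 : ∑ e ∈ E with (e.1.1, e.1.2.1) = (u, v), F e.1.1 e.1.2.1
      = ∑ e ∈ E with (e.1.1, e.1.2.1) = (u, v), F u v := by
    apply Finset.sum_congr rfl
    intro e he
    have := (Finset.mem_filter.1 he).2
    simp only [Prod.mk.injEq] at this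
    rw [this.1, this.2]
  rw [h1, Finset.sum_const, nsmul_eq_mul]
  split_ifs with hr
  · congr 1
    rw [← Nat.cast_sub (hb u v), ← Nat.card_Ico]
    congr 1
    apply Finset.card_bij (fun e _ => e.1.2.2)
    · rintro ⟨⟨x, y, k⟩, h⟩ he
      rw [Finset.mem_filter, hE] at he
      simp only [Prod.mk.injEq] at he
      obtain ⟨⟨_, h2⟩, rfl, rfl⟩ := he
      exact Finset.mem_Ico.2 ⟨h2, h⟩
    · rintro ⟨⟨x, y, k⟩, h⟩ he ⟨⟨x', y', k'⟩, h'⟩ he' hk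
      rw [Finset.mem_filter] at he he'
      simp only [Prod.mk.injEq] at he he' hk
      obtain ⟨_, rfl, rfl⟩ := he
      obtain ⟨_, rfl, rfl⟩ := he'
      subst hk
      rfl
    · intro k hk
      rw [Finset.mem_Ico] at hk
      refine ⟨⟨(u, v, k), hk.2⟩, ?_, rfl⟩
      rw [Finset.mem_filter, hE]
      exact ⟨⟨hr, hk.1⟩, rfl⟩
  · have : (E.filter fun e => (e.1.1, e.1.2.1) = (u, v)) = ∅ := by
      apply Finset.filter_eq_empty_iff.2
      intro e he h
      simp only [Prod.mk.injEq] at h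
      have := ((hE e).1 he).1
      rw [h.1, h.2] at this
      exact hr this
    rw [this]
    simp

lemma sum_ind (g : {x : α // x ≠ G.sink} → ℝ) (a : α) :
    ∑ x : {x : α // x ≠ G.sink}, (if (x : α) = a then (1 : ℝ) else 0) * g x = G.extz g a := by
  by_cases h : a = G.sink
  · subst h
    rw [extz_sink]
    apply Finset.sum_eq_zero
    intro x _
    simp [x.2]
  · rw [Finset.sum_eq_single ⟨a, h⟩]
    · simp [extz, h]
    · intro x _ hx
      have : (x : α) ≠ a := fun h' => hx (Subtype.ext h')
      simp [this]
    · simp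

/-- graph with changed multiplicities -/
def rb (b' : α → α → ℕ) : Graph α := ⟨G.sink, b'⟩

lemma det_identity (hG : G.IsSandpileGraph) (b' : α → α → ℕ) (hs' : ∀ x y, b' x y = b' y x)
    (hb : ∀ x y, b' x y ≤ G.b x y) :
    ∃ E : Finset G.OEdge, (∀ e ∈ E, b' e.1.1 e.1.2.1 < G.b e.1.1 e.1.2.1) ∧
      Matrix.det (Matrix.of fun e f : ↥E => G.Kmat e f)
        = ((G.rb b').lapG ℝ).det / (G.lapG ℝ).det := by
  have hdet : (G.lapG ℝ).det ≠ 0 := (G.lapG_posDef hG).det_pos.ne'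
  obtain ⟨hs, hl, -⟩ := hG
  have := G.finite_OEdge
  have := Fintype.ofFinite G.OEdge
  let r : α → ℕ := fun x => (Fintype.equivFin α x : ℕ)
  have hr : Function.Injective r := fun x y h => (Fintype.equivFin α).injective (Fin.ext h)
  let E : Finset G.OEdge := Finset.univ.filter fun e =>
    r e.1.1 < r e.1.2.1 ∧ b' e.1.1 e.1.2.1 ≤ e.1.2.2
  have hE : ∀ e, e ∈ E ↔ r e.1.1 < r e.1.2.1 ∧ b' e.1.1 e.1.2.1 ≤ e.1.2.2 := by
    intro e; simp [E]
  refine ⟨E, fun e he => lt_of_le_of_lt ((hE e).1 he).2 e.2, ?_⟩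
  let B : Matrix {x : α // x ≠ G.sink} ↥E ℝ := Matrix.of fun x e =>
    (if (x : α) = e.1.1.1 then (1 : ℝ) else 0) - (if (x : α) = e.1.1.2.1 then 1 else 0)
  let L' : Matrix {x : α // x ≠ G.sink} {x : α // x ≠ G.sink} ℝ := (G.rb b').lapG ℝ
  have hBB : B * B.transpose = G.lapG ℝ - L' := by
    ext x y
    rw [Matrix.mul_apply]
    simp only [B, Matrix.transpose_apply, Matrix.of_apply]
    rw [G.sum_edges b' r E hE hb (fun u v =>
      ((if (x : α) = u then (1 : ℝ) else 0) - (if (x : α) = v then 1 else 0)) *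
      ((if (y : α) = u then (1 : ℝ) else 0) - (if (y : α) = v then 1 else 0)))]
    set m : α → α → ℝ := fun u v => if r u < r v then ((G.b u v : ℝ) - b' u v) else 0 with hm
    have h1 : ∀ u v, (if r u < r v then ((G.b u v : ℝ) - b' u v) *
        (((if (x : α) = u then (1 : ℝ) else 0) - (if (x : α) = v then 1 else 0)) *
        ((if (y : α) = u then (1 : ℝ) else 0) - (if (y : α) = v then 1 else 0))) else 0)
        = (if (x : α) = u then if (y : α) = u then m u v else 0 else 0)
        - (if (x : α) = u then if (y : α) = v then m u v else 0 else 0)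
        - (if (y : α) = u then if (x : α) = v then m u v else 0 else 0)
        + (if (x : α) = v then if (y : α) = v then m u v else 0 else 0) := by
      intro u v
      simp only [hm]
      split_ifs <;> ring
    have hmm : ∀ u v, m u v + m v u = (G.b u v : ℝ) - b' u v := by
      intro u v
      simp only [hm]
      rcases lt_trichotomy (r u) (r v) with h | h | h
      · simp [h, h.le.not_gt]
      · have := hr h
        subst this
        have h1 := hb u u
        rw [hl] at h1
        have : b' u u = 0 := by omega
        simp [hl, this]
      · simp [h, h.le.not_gt, hs u v, hs' u v]
    have s1 : ∑ u, ∑ v, (if (x : α) = u then if (y : α) = u then m u v else 0 else 0)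
        = if (x : α) = y then ∑ v, m x v else 0 := by
      rw [Finset.sum_eq_single (x : α)]
      · by_cases h : (x : α) = y
        · simp [h]
        · simp [h, Ne.symm h]
      · intro u _ hu; simp [Ne.symm hu]
      · simp
    have s2 : ∀ x y : α, ∑ u, ∑ v, (if x = u then if y = v then m u v else 0 else 0)
        = m x y := by
      intro x y
      rw [Finset.sum_eq_single x]
      · simp
      · intro u _ hu; simp [Ne.symm hu]
      · simp
    have s3 : ∑ u, ∑ v, (if (x : α) = v then if (y : α) = v then m u v else 0 else 0)
        = if (x : α) = y then ∑ v, m v x else 0 := by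
      by_cases h : (x : α) = y
      · simp [h]
      · rw [if_neg h]
        apply Finset.sum_eq_zero; intro u _
        apply Finset.sum_eq_zero; intro v _
        by_cases h1 : (x : α) = v
        · have : (y : α) ≠ v := fun h2 => h (h1.trans h2.symm)
          simp [this]
        · simp [h1]
    simp only [h1, Finset.sum_add_distrib, Finset.sum_sub_distrib]
    rw [s1, s2, s2, s3]
    have hdeg : (G.deg x : ℝ) - ((G.rb b').deg x : ℝ) = ∑ v, m x v + ∑ v, m v x := by
      rw [← Finset.sum_add_distrib]
      simp only [hmm, Finset.sum_sub_distrib, deg, rb, Nat.cast_sum]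
    change _ = (if (x : α) = y then (G.deg x : ℝ) else -(G.b x y : ℝ)) -
      (if (x : α) = y then ((G.rb b').deg x : ℝ) else -(b' x y : ℝ))
    by_cases h : (x : α) = y
    · have e1 : m x y = 0 := by simp [hm, h]
      have e2 : m y x = 0 := by simp [hm, h]
      have hdeg' := hdeg
      simp only [h] at hdeg' ⊢
      simp only [if_true]
      rw [h] at e1
      rw [e1]
      linarith
    · simp only [h, if_false]
      have := hmm x y
      linarith
  have hBHB : ∀ e f : ↥E, (B.transpose * (G.lapG ℝ)⁻¹ * B) e f =
      G.Hfun e.1.1.1 f.1.1.1 - G.Hfun e.1.1.1 f.1.1.2.1 - G.Hfun e.1.1.2.1 f.1.1.1 +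
      G.Hfun e.1.1.2.1 f.1.1.2.1 := by
    intro e f
    have hlr : G.lapRed = G.lapG ℝ := rfl
    have hH : ∀ a c : α, G.Hfun a c =
        G.extz (fun y => G.extz (fun x => (G.lapG ℝ)⁻¹ x y) a) c := by
      intro a c
      unfold Hfun extz
      rw [hlr]
      split_ifs <;> rfl
    have e1 : ∀ y, (B.transpose * (G.lapG ℝ)⁻¹) e y =
        G.extz (fun x => (G.lapG ℝ)⁻¹ x y) e.1.1.1 - G.extz (fun x => (G.lapG ℝ)⁻¹ x y) e.1.1.2.1 := by
      intro y
      rw [Matrix.mul_apply]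
      simp only [Matrix.transpose_apply, B, Matrix.of_apply, sub_mul, Finset.sum_sub_distrib]
      rw [G.sum_ind, G.sum_ind]
    rw [Matrix.mul_apply]
    simp only [e1]
    have e2 : ∀ g : {x : α // x ≠ G.sink} → ℝ, ∑ y, g y * B y f
        = G.extz g f.1.1.1 - G.extz g f.1.1.2.1 := by
      intro g
      simp only [B, Matrix.of_apply, mul_sub, Finset.sum_sub_distrib]
      rw [← G.sum_ind, ← G.sum_ind]
      simp only [mul_comm]
    rw [e2]
    simp only [hH]
    have e3 : ∀ (g g' : {x : α // x ≠ G.sink} → ℝ) (c : α),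
        G.extz (fun y => g y - g' y) c = G.extz g c - G.extz g' c := by
      intro g g' c
      unfold extz
      split_ifs <;> simp
    rw [e3, e3]
    ring
  have hK : (Matrix.of fun e f : ↥E => G.Kmat e f)
      = 1 - B.transpose * (G.lapG ℝ)⁻¹ * B := by
    ext e f
    rw [Matrix.sub_apply, hBHB, Matrix.of_apply, Kmat, Matrix.one_apply]
    congr 1
    by_cases h : e = f
    · subst h
      rw [if_pos rfl, if_pos rfl]
    · rw [if_neg h, if_neg (fun h' => h (Subtype.ext h'))]
  have key : Matrix.det (1 - B.transpose * (G.lapG ℝ)⁻¹ * B)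
      = ((G.rb b').lapG ℝ).det / (G.lapG ℝ).det := by
    have hu : IsUnit (G.lapG ℝ).det := hdet.isUnit
    rw [Matrix.det_one_sub_mul_comm, ← Matrix.mul_assoc, hBB]
    rw [Matrix.sub_mul, Matrix.mul_nonsing_inv _ hu, sub_sub_cancel, Matrix.det_mul,
      Matrix.det_nonsing_inv, Ring.inverse_eq_inv', div_eq_mul_inv]
    rfl
  rw [← key, ← hK]

/-- duality between recurrent and superstable configurations -/
def dual (c : α → ℕ) (x : α) : ℕ := if x = G.sink then 0 else G.deg x - 1 - c x

lemma degIn_mono {F F' : Finset α} (h : F ⊆ F') (x : α) : G.degIn F x ≤ G.degIn F' x :=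
  Finset.sum_le_sum_of_subset h

lemma degIn_compl (F : Finset α) (x : α) : G.degIn F x + G.degIn Fᶜ x = G.deg x :=
  Finset.sum_add_sum_compl F _

lemma Ss_lt {c : α → ℕ} (hc : G.Ss c) {x : α} (hx : x ≠ G.sink) : c x < G.deg x := by
  obtain ⟨y, hy, h⟩ := hc.2 {x} (by simpa using hx.symm) (by simp)
  have := Finset.mem_singleton.1 hy
  subst this
  have := G.degIn_compl {y} y
  omega

lemma dual_dual {c : α → ℕ} (h0 : c G.sink = 0) (hlt : ∀ x, x ≠ G.sink → c x < G.deg x) :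
    G.dual (G.dual c) = c := by
  funext x
  unfold dual
  by_cases hx : x = G.sink
  · simp [hx, h0]
  · have := hlt x hx
    simp only [hx, if_false]
    omega

lemma sub_VSet {F : Finset α} : F ⊆ G.VSet ↔ G.sink ∉ F := by
  unfold VSet
  constructor
  · intro h hs
    simpa using h hs
  · intro h x hx
    simp only [Finset.mem_erase, Finset.mem_univ, and_true]
    rintro rfl
    exact h hx

lemma stable_iff {η : α → ℕ} : G.Stable η ↔ ∀ x, x ≠ G.sink → η x < G.deg x := by
  simp [Stable, VSet]

lemma rec_to_Ss {η : α → ℕ} (h : G.Recurrent η) : G.Ss (G.dual η) := by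
  refine ⟨by simp [dual], fun F hs hF => ?_⟩
  obtain ⟨x, hx, hle⟩ := h.2 F (G.sub_VSet.2 hs) hF
  refine ⟨x, hx, ?_⟩
  have hxs : x ≠ G.sink := fun h => hs (h ▸ hx)
  have := G.stable_iff.1 h.1 x hxs
  have := G.degIn_compl F x
  simp only [dual, hxs, if_false]
  omega

lemma Ss_to_rec {c : α → ℕ} (h : G.Ss c) : G.Recurrent (G.dual c) := by
  refine ⟨G.stable_iff.2 fun x hx => ?_, fun F hs hF => ?_⟩
  · have := G.Ss_lt h hx
    simp only [dual, hx, if_false]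
    omega
  · obtain ⟨x, hx, hlt⟩ := h.2 F (G.sub_VSet.1 hs) hF
    refine ⟨x, hx, ?_⟩
    have hxs : x ≠ G.sink := fun h => (G.sub_VSet.1 hs) (h ▸ hx)
    have := G.Ss_lt h hxs
    have := G.degIn_compl F x
    simp only [dual, hxs, if_false]
    omega

lemma card_rec (P : (α → ℕ) → Prop) :
    Nat.card {η : α → ℕ // η G.sink = 0 ∧ G.Recurrent η ∧ P η}
      = Nat.card {c : α → ℕ // G.Ss c ∧ P (G.dual c)} := by
  apply Nat.card_congr
  refine ⟨fun η => ⟨G.dual η.1, G.rec_to_Ss η.2.2.1, ?_⟩,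
    fun c => ⟨G.dual c.1, by simp [dual], G.Ss_to_rec c.2.1, c.2.2⟩, ?_, ?_⟩
  · rw [G.dual_dual η.2.1 (G.stable_iff.1 η.2.2.1.1)]
    exact η.2.2.2
  · intro η
    exact Subtype.ext (G.dual_dual η.2.1 (G.stable_iff.1 η.2.2.1.1))
  · intro c
    exact Subtype.ext (G.dual_dual c.2.1.1 (fun x hx => G.Ss_lt c.2.1 hx))

/-- the condition on the complement of `W` -/
def Core (W : Finset α) (c : α → ℕ) : Prop :=
  ∀ F : Finset α, Disjoint F W → G.sink ∉ F → F.Nonempty → ∃ x ∈ F, c x < G.degIn (F ∪ W)ᶜ x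

/-- superstability on the wired graph -/
def WSs (W : Finset α) (c : α → ℕ) : Prop :=
  ∀ F : Finset α, F ⊆ W → F.Nonempty → ∃ x ∈ F, c x < G.degIn Fᶜ x

lemma Ss_of_core {W : Finset α} {c : α → ℕ} (h0 : c G.sink = 0) (hc : G.Core W c)
    (hw : G.WSs W c) : G.Ss c := by
  refine ⟨h0, fun F hs hF => ?_⟩
  by_cases hFW : F ⊆ W
  · exact hw F hFW hF
  · have hne : (F \ W).Nonempty := Finset.sdiff_nonempty.2 hFW
    obtain ⟨x, hx, hlt⟩ := hc (F \ W) Finset.sdiff_disjoint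
      (fun h => hs (Finset.mem_sdiff.1 h).1) hne
    refine ⟨x, (Finset.mem_sdiff.1 hx).1, lt_of_lt_of_le hlt (G.degIn_mono ?_ x)⟩
    intro y hy
    simp only [Finset.mem_compl, Finset.mem_union, Finset.mem_sdiff] at hy ⊢
    tauto

lemma core_zero {W : Finset α} (hWs : G.sink ∉ W) (hconn : G.ConnectedOn {x : α | x ∉ W})
    {c : α → ℕ} (hc : ∀ x, x ∉ W → c x = 0) : G.Core W c := by
  intro F hd hs hF
  by_contra hcon
  push Not at hcon
  have hz : ∀ x ∈ F, ∀ y, y ∉ F → y ∉ W → G.b x y = 0 := by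
    intro x hx y hy hyW
    have h1 := hcon x hx
    rw [hc x (Finset.disjoint_left.1 hd hx)] at h1
    have h2 : G.degIn (F ∪ W)ᶜ x = 0 := by omega
    exact (Finset.sum_eq_zero_iff.1 h2) y (by simp [hy, hyW])
  obtain ⟨x, hx⟩ := hF
  have gen : ∀ z, Relation.ReflTransGen (fun u v => u ∈ {x : α | x ∉ W} ∧ v ∈ {x : α | x ∉ W}
      ∧ 0 < G.b u v) x z → z ∈ F := by
    intro z hz'
    induction hz' with
    | refl => exact hx
    | @tail u v _ h ih =>
      by_contra hv
      have := hz u ih v hv h.2.1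
      have := h.2.2
      omega
  exact hs (gen _ (hconn x (Finset.disjoint_left.1 hd hx) _ hWs))

lemma minimal_wired {W : Finset α} (hWs : G.sink ∉ W)
    (hconn : G.ConnectedOn {x : α | x ∉ W}) {ξ : α → ℕ}
    (hmin : G.Minimal W ξ) :
    G.WSs W (G.dual ξ) ∧ ∀ w ∈ W, ¬ G.WSs W (fun x => G.dual ξ x + if x = w then 1 else 0) := by
  obtain ⟨⟨η, hη, hηξ⟩, hmin⟩ := hmin
  have hdW : ∀ x ∈ W, G.dual η x = G.dual ξ x := by
    intro x hx
    simp only [dual, hηξ x hx]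
  have hw1 : G.WSs W (G.dual ξ) := by
    intro F hFW hF
    obtain ⟨x, hx, h⟩ := (G.rec_to_Ss hη).2 F (fun h => hWs (hFW h)) hF
    exact ⟨x, hx, by rwa [← hdW x (hFW hx)]⟩
  refine ⟨hw1, ?_⟩
  intro w hw hbad
  let c : α → ℕ := fun x => if x ∈ W then G.dual ξ x else 0
  let c' : α → ℕ := fun x => if x ∈ W then G.dual ξ x + (if x = w then 1 else 0) else 0
  have hSc : G.Ss c := by
    apply G.Ss_of_core (W := W) (by simp [c, hWs])
    · apply G.core_zero hWs hconn
      intro x hx; simp [c, hx]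
    · intro F hFW hF
      obtain ⟨x, hx, h⟩ := hw1 F hFW hF
      exact ⟨x, hx, by simpa [c, hFW hx] using h⟩
  have hSc' : G.Ss c' := by
    apply G.Ss_of_core (W := W) (by simp [c', hWs])
    · apply G.core_zero hWs hconn
      intro x hx; simp [c', hx]
    · intro F hFW hF
      obtain ⟨x, hx, h⟩ := hbad F hFW hF
      exact ⟨x, hx, by simpa only [c', hFW hx, if_true] using h⟩
  have hws : w ≠ G.sink := fun h => hWs (h ▸ hw)
  have hlt : G.dual ξ w + 1 < G.deg w := by
    have := G.Ss_lt hSc' hws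
    simpa [c', hw] using this
  have hcw : c w = G.dual ξ w := by simp [c, hw]
  refine hmin (G.dual c) (G.Ss_to_rec hSc) ?_ w hw ⟨?_, ?_⟩
  · intro x hx
    have hxs : x ≠ G.sink := fun h => hWs (h ▸ hx)
    have h1 : η x < G.deg x := G.stable_iff.1 hη.1 x hxs
    rw [hηξ x hx] at h1
    simp only [c, dual, hxs, hx, if_true, if_false]
    omega
  · simp only [dual, hws, if_false]
    rw [hcw]
    omega
  · have : SubOne (G.dual c) w = G.dual c' := by
      funext x
      unfold SubOne
      by_cases hxw : x = w
      · subst hxw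
        simp only [dual, hws, if_true, if_false, c, c', hw]
        omega
      · simp only [hxw, if_false, dual, c, c', add_zero]
    rw [this]
    exact G.Ss_to_rec hSc'

lemma core_of_Ss (hs : ∀ x y, G.b x y = G.b y x) {W : Finset α} (hWs : G.sink ∉ W) {c : α → ℕ}
    (hc : G.Ss c)
    (hmax : ∀ w ∈ W, ¬ G.WSs W (fun x => c x + if x = w then 1 else 0)) : G.Core W c := by
  intro F hd hsF hF
  by_contra hcon
  push Not at hcon
  let P : Finset α → Prop := fun W' => W' ⊆ W ∧ (∀ x ∈ F, G.degIn (F ∪ W')ᶜ x ≤ c x) ∧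
    ∀ T ⊆ W \ W', T.Nonempty → ∃ z ∈ T, c z < G.degIn (F ∪ (W' ∪ T))ᶜ z
  have hPW : P W := by
    refine ⟨subset_rfl, hcon, ?_⟩
    intro T hT hTne
    obtain ⟨t, ht⟩ := hTne
    simpa using hT ht
  obtain ⟨W', hPW', hWmin⟩ := Finset.exists_min_image (W.powerset.filter P) Finset.card
    ⟨W, Finset.mem_filter.2 ⟨Finset.mem_powerset.2 subset_rfl, hPW⟩⟩
  obtain ⟨hW'W, hF', hQ⟩ := (Finset.mem_filter.1 hPW').2
  obtain ⟨w, hwU, hwlt⟩ := hc.2 (F ∪ W')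
    (fun h => (Finset.mem_union.1 h).elim hsF (fun h => hWs (hW'W h)))
    (hF.mono Finset.subset_union_left)
  have hwW' : w ∈ W' := by
    rcases Finset.mem_union.1 hwU with h | h
    · exact absurd hwlt (not_lt.2 (hF' w h))
    · exact h
  have hwW := hW'W hwW'
  have hwF : w ∉ F := fun h => Finset.disjoint_left.1 hd h hwW
  -- some vertex of F is adjacent to w
  have hadj : ∃ x ∈ F, 0 < G.b x w := by
    by_contra hno
    push Not at hno
    have hlt : (W'.erase w).card < W'.card := Finset.card_erase_lt_of_mem hwW'
    refine absurd (hWmin (W'.erase w) (Finset.mem_filter.2 ⟨Finset.mem_powerset.2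
      ((Finset.erase_subset _ _).trans hW'W), (Finset.erase_subset _ _).trans hW'W, ?_, ?_⟩))
      (not_le.2 hlt)
    · intro x hx
      have h1 := hF' x hx
      have h2 : G.degIn (F ∪ W'.erase w)ᶜ x ≤ G.degIn (insert w (F ∪ W')ᶜ) x := by
        apply G.degIn_mono
        intro y hy
        simp only [Finset.mem_compl, Finset.mem_union, Finset.mem_erase, Finset.mem_insert] at hy ⊢
        tauto
      have h3 : G.degIn (insert w (F ∪ W')ᶜ) x = G.b x w + G.degIn (F ∪ W')ᶜ x := by
        unfold degIn
        rw [Finset.sum_insert (by simp [hwW'])]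
      have := hno x hx
      omega
    · intro T hT hTne
      by_cases hwT : w ∈ T
      · by_cases hTe : (T.erase w).Nonempty
        · obtain ⟨z, hz, hzlt⟩ := hQ (T.erase w) (by
            intro y hy
            have := hT (Finset.mem_of_mem_erase hy)
            have h2 := Finset.ne_of_mem_erase hy
            simp only [Finset.mem_sdiff, Finset.mem_erase] at this ⊢
            tauto) hTe
          refine ⟨z, Finset.mem_of_mem_erase hz, lt_of_lt_of_le hzlt (G.degIn_mono ?_ z)⟩
          intro y hy
          simp only [Finset.mem_compl, Finset.mem_union, Finset.mem_erase] at hy ⊢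
          by_cases hyw : y = w
          · subst hyw; tauto
          · tauto
        · refine ⟨w, hwT, lt_of_lt_of_le hwlt (G.degIn_mono ?_ w)⟩
          rw [Finset.not_nonempty_iff_eq_empty] at hTe
          intro y hy
          simp only [Finset.mem_compl, Finset.mem_union, Finset.mem_erase] at hy ⊢
          have : y ∈ T → y = w := by
            intro hyT
            by_contra hne
            have : y ∈ T.erase w := Finset.mem_erase.2 ⟨hne, hyT⟩
            simp [hTe] at this
          by_cases hyw : y = w
          · subst hyw; tauto
          · tauto
      · obtain ⟨z, hz, hzlt⟩ := hQ T (by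
            intro y hy
            have h1 := hT hy
            have h2 : y ≠ w := fun h => hwT (h ▸ hy)
            simp only [Finset.mem_sdiff, Finset.mem_erase] at h1 ⊢
            tauto) hTne
        refine ⟨z, hz, lt_of_lt_of_le hzlt (G.degIn_mono ?_ z)⟩
        intro y hy
        simp only [Finset.mem_compl, Finset.mem_union, Finset.mem_erase] at hy ⊢
        tauto
  obtain ⟨x, hxF, hxw⟩ := hadj
  have hstrict : c w + 1 < G.degIn W'ᶜ w := by
    have hxW' : x ∉ W' := fun h => Finset.disjoint_left.1 hd hxF (hW'W h)
    have h2 : G.degIn (insert x (F ∪ W')ᶜ) w ≤ G.degIn W'ᶜ w := by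
      apply G.degIn_mono
      intro y hy
      simp only [Finset.mem_compl, Finset.mem_union, Finset.mem_insert] at hy ⊢
      rcases hy with rfl | hy
      · exact hxW'
      · tauto
    have h3 : G.degIn (insert x (F ∪ W')ᶜ) w = G.b w x + G.degIn (F ∪ W')ᶜ w := by
      unfold degIn
      rw [Finset.sum_insert (by simp [hxF])]
    rw [hs] at hxw
    omega
  apply hmax w hwW
  intro T hTW hTne
  by_cases hTW' : T ⊆ W'
  · by_cases hwT : w ∈ T
    · refine ⟨w, hwT, ?_⟩
      simp only [if_true]
      exact lt_of_lt_of_le hstrict (G.degIn_mono (Finset.compl_subset_compl.2 hTW') w)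
    · obtain ⟨z, hz, hzlt⟩ := hc.2 T (fun h => hWs (hTW h)) hTne
      refine ⟨z, hz, ?_⟩
      have : z ≠ w := fun h => hwT (h ▸ hz)
      simpa [this] using hzlt
  · obtain ⟨z, hz, hzlt⟩ := hQ (T \ W') (Finset.sdiff_subset_sdiff hTW subset_rfl)
      (Finset.sdiff_nonempty.2 hTW')
    have hz' := Finset.mem_sdiff.1 hz
    refine ⟨z, hz'.1, ?_⟩
    have : z ≠ w := fun h => hz'.2 (h ▸ hwW')
    simp only [this, if_false, add_zero]
    refine lt_of_lt_of_le hzlt (G.degIn_mono ?_ z)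
    intro y hy
    simp only [Finset.mem_compl, Finset.mem_union, Finset.mem_sdiff] at hy ⊢
    tauto

lemma exists_parent (hG : G.IsSandpileGraph) : ∃ (d : α → ℕ) (p : α → α),
    ∀ x, x ≠ G.sink → 0 < G.b x (p x) ∧ d (p x) < d x := by
  obtain ⟨hs, hl, hc⟩ := hG
  have hex : ∀ x, ∃ n, ∃ w : ℕ → α, w 0 = x ∧ w n = G.sink ∧ ∀ i < n, 0 < G.b (w i) (w (i + 1)) := by
    intro x
    induction hc x G.sink using Relation.ReflTransGen.head_induction_on with
    | refl => exact ⟨0, fun _ => G.sink, rfl, rfl, by simp⟩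
    | @head a b hab _ ih =>
      obtain ⟨n, w, h0, hn, hw⟩ := ih
      refine ⟨n + 1, fun i => Nat.casesOn i a w, rfl, hn, ?_⟩
      intro i hi
      cases i with
      | zero => simpa [h0] using hab
      | succ j => exact hw j (by omega)
  have key : ∀ x, x ≠ G.sink → ∃ y, 0 < G.b x y ∧ Nat.find (hex y) < Nat.find (hex x) := by
    intro x hx
    obtain ⟨w, h0, hn, hw⟩ := Nat.find_spec (hex x)
    have hpos : 0 < Nat.find (hex x) := by
      rcases Nat.eq_zero_or_pos (Nat.find (hex x)) with h | h
      · rw [h, h0] at hn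
        exact absurd hn hx
      · exact h
    refine ⟨w 1, ?_, ?_⟩
    · have := hw 0 hpos
      rwa [h0] at this
    · have : Nat.find (hex (w 1)) ≤ Nat.find (hex x) - 1 := by
        apply Nat.find_min'
        refine ⟨fun i => w (i + 1), rfl, ?_, fun i hi => hw (i + 1) (by omega)⟩
        change w (Nat.find (hex x) - 1 + 1) = _
        rw [Nat.sub_add_cancel hpos, hn]
      omega
  refine ⟨fun x => Nat.find (hex x), fun x => if h : x ≠ G.sink then (key x h).choose else x, ?_⟩
  intro x hx
  simp only [hx, ne_eq, not_false_eq_true, dif_pos]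
  exact (key x hx).choose_spec

/-- multiplicities where `W` is attached as a forest with parent map `p` -/
def fb (W : Finset α) (p : α → α) (x y : α) : ℕ :=
  if x ∈ W ∨ y ∈ W then (if (x ∈ W ∧ y = p x) ∨ (y ∈ W ∧ x = p y) then 1 else 0) else G.b x y

lemma fb_symm (hs : ∀ x y, G.b x y = G.b y x) (W : Finset α) (p : α → α) (x y : α) :
    G.fb W p x y = G.fb W p y x := by
  unfold fb
  simp only [or_comm, hs x y]

lemma fb_le (hs : ∀ x y, G.b x y = G.b y x) {W : Finset α} {p : α → α}
    (hp : ∀ x ∈ W, 0 < G.b x (p x)) (x y : α) : G.fb W p x y ≤ G.b x y := by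
  unfold fb
  split_ifs with h1 h2
  · rcases h2 with ⟨h, rfl⟩ | ⟨h, rfl⟩
    · exact hp _ h
    · rw [hs]; exact hp _ h
  · exact Nat.zero_le _
  · exact le_rfl

lemma fb_graph (hG : G.IsSandpileGraph) {W : Finset α} (hWs : G.sink ∉ W)
    (hconn : G.ConnectedOn {x : α | x ∉ W}) {d : α → ℕ} {p : α → α}
    (hp : ∀ x ∈ W, 0 < G.b x (p x) ∧ d (p x) < d x) : (G.rb (G.fb W p)).IsSandpileGraph := by
  obtain ⟨hs, hl, -⟩ := hG
  have hsym : ∀ x y, G.fb W p x y = G.fb W p y x := G.fb_symm hs W p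
  refine ⟨hsym, ?_, ?_⟩
  · intro x
    have := G.fb_le hs (fun x hx => (hp x hx).1) x x
    rw [hl] at this
    exact Nat.le_zero.1 this
  · have toSink : ∀ n x, d x = n →
        Relation.ReflTransGen (fun u v => 0 < G.fb W p u v) x G.sink := by
      intro n
      induction n using Nat.strong_induction_on with
      | _ n ih =>
        intro x hx
        by_cases hxW : x ∈ W
        · refine Relation.ReflTransGen.head ?_ (ih _ (hx ▸ (hp x hxW).2) (p x) rfl)
          simp [fb, hxW]
        · refine Relation.ReflTransGen.mono ?_ _ _ (hconn x hxW _ hWs)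
          rintro u v ⟨hu, hv, huv⟩
          have hu : u ∉ W := hu
          have hv : v ∉ W := hv
          simpa [fb, hu, hv] using huv
    intro x y
    refine (toSink _ x rfl).trans ?_
    have hsm : Std.Symm (fun u v => 0 < G.fb W p u v) := ⟨by
      intro u v h
      rw [hsym]; exact h⟩
    exact (Relation.ReflTransGen.stdSymm (r := fun u v => 0 < G.fb W p u v)).symm _ _
      (toSink _ y rfl)

lemma fb_Ss_iff {W : Finset α} (hWs : G.sink ∉ W) {d : α → ℕ} {p : α → α}
    (hp : ∀ x ∈ W, d (p x) < d x) (c : α → ℕ) :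
    (G.rb (G.fb W p)).Ss c ↔ c G.sink = 0 ∧ (∀ x ∈ W, c x = 0) ∧ G.Core W c := by
  constructor
  · intro hc
    refine ⟨hc.1, ?_⟩
    let q : α → α := fun x => if x ∈ W then p x else x
    have main : ∀ F : Finset α, G.sink ∉ F → F.Nonempty → ∃ S : Finset α, F ⊆ S ∧
        (∀ y ∈ W, p y ∈ S → y ∈ S) ∧
        ∃ x ∈ F, c x < ∑ y ∈ Sᶜ, G.fb W p x y := by
      intro F hsF hF
      let S : Finset α := Finset.univ.filter fun x => ∃ n : ℕ, q^[n] x ∈ F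
      have hFS : F ⊆ S := fun x hx => Finset.mem_filter.2 ⟨Finset.mem_univ _, 0, hx⟩
      have hfix : ∀ x, x ∉ W → ∀ n : ℕ, q^[n] x = x := by
        intro x hx n
        exact Function.iterate_fixed (by simp [q, hx]) n
      have hSs : G.sink ∉ S := by
        intro h
        obtain ⟨n, hn⟩ := (Finset.mem_filter.1 h).2
        rw [hfix _ hWs] at hn
        exact hsF hn
      have hch : ∀ y ∈ W, p y ∈ S → y ∈ S := by
        intro y hy h
        obtain ⟨n, hn⟩ := (Finset.mem_filter.1 h).2
        refine Finset.mem_filter.2 ⟨Finset.mem_univ _, n + 1, ?_⟩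
        rw [Function.iterate_succ_apply]
        simpa [q, hy] using hn
      refine ⟨S, hFS, hch, ?_⟩
      obtain ⟨x, hxS, hx⟩ := hc.2 S hSs (hF.mono hFS)
      refine ⟨x, ?_, hx⟩
      by_contra hxF
      obtain ⟨n, hn⟩ := (Finset.mem_filter.1 hxS).2
      have hxW : x ∈ W := by
        by_contra hxW
        rw [hfix x hxW] at hn
        exact hxF hn
      have hpS : p x ∈ S := by
        cases n with
        | zero => exact absurd hn hxF
        | succ n =>
          rw [Function.iterate_succ_apply] at hn
          have hq : q x = p x := by simp [q, hxW]
          rw [hq] at hn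
          exact Finset.mem_filter.2 ⟨Finset.mem_univ _, n, hn⟩
      have hz : (G.rb (G.fb W p)).degIn Sᶜ x = 0 := by
        apply Finset.sum_eq_zero
        intro y hy
        have hyS : y ∉ S := Finset.mem_compl.1 hy
        change G.fb W p x y = 0
        unfold fb
        rw [if_pos (Or.inl hxW), if_neg]
        rintro (⟨_, rfl⟩ | ⟨hyW, rfl⟩)
        · exact hyS hpS
        · exact hyS (hch y hyW hxS)
      omega
    constructor
    · intro w hw
      obtain ⟨S, hFS, hch, x, hx, hlt⟩ := main {w} (by
        simp only [Finset.mem_singleton]; rintro rfl; exact hWs hw) (by simp)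
      have hxw := Finset.mem_singleton.1 hx
      subst hxw
      have : ∑ y ∈ Sᶜ, G.fb W p x y ≤ ∑ y ∈ Sᶜ, if y = p x then 1 else 0 := by
        apply Finset.sum_le_sum
        intro y hy
        have hyS : y ∉ S := Finset.mem_compl.1 hy
        unfold fb
        rw [if_pos (Or.inl hw)]
        split_ifs with h1 h2 h2
        · exact le_rfl
        · rcases h1 with h1 | h1
          · exact absurd h1.2 h2
          · exact absurd (hch y h1.1 (h1.2 ▸ hFS hx)) hyS
        · exact Nat.zero_le _
        · exact le_rfl
      have h2 : (∑ y ∈ Sᶜ, if y = p x then 1 else 0) ≤ 1 := by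
        rw [Finset.sum_ite_eq']
        split_ifs <;> simp
      omega
    · intro F hd hsF hF
      obtain ⟨S, hFS, hch, x, hx, hlt⟩ := main F hsF hF
      refine ⟨x, hx, lt_of_lt_of_le hlt ?_⟩
      have hxW : x ∉ W := Finset.disjoint_left.1 hd hx
      unfold degIn
      calc ∑ y ∈ Sᶜ, G.fb W p x y ≤ ∑ y ∈ Sᶜ, (if y ∈ W then 0 else G.b x y) := by
            apply Finset.sum_le_sum
            intro y hy
            have hyS : y ∉ S := Finset.mem_compl.1 hy
            by_cases hyW : y ∈ W
            · unfold fb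
              rw [if_pos (Or.inr hyW), if_pos hyW, if_neg]
              rintro (⟨h, _⟩ | ⟨_, h⟩)
              · exact hxW h
              · exact hyS (hch y hyW (h ▸ hFS hx))
            · simp [fb, hxW, hyW]
        _ = ∑ y ∈ Sᶜ with y ∉ W, G.b x y := by
            rw [Finset.sum_filter]
            refine Finset.sum_congr rfl fun y _ => ?_
            by_cases hyW : y ∈ W <;> simp [hyW]
        _ ≤ _ := by
            apply Finset.sum_le_sum_of_subset
            intro y hy
            simp only [Finset.mem_filter, Finset.mem_compl, Finset.mem_union] at hy ⊢
            exact fun h => h.elim (fun h => hy.1 (hFS h)) hy.2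
  · rintro ⟨h0, hW0, hcore⟩
    refine (G.rb (G.fb W p)).Ss_of_core (W := W) h0 ?_ ?_
    · intro F hd hsF hF
      obtain ⟨x, hx, hlt⟩ := hcore F hd hsF hF
      refine ⟨x, hx, lt_of_lt_of_le hlt (le_of_eq ?_)⟩
      have hxW : x ∉ W := Finset.disjoint_left.1 hd hx
      apply Finset.sum_congr rfl
      intro y hy
      have hyW : y ∉ W := by
        simp only [Finset.mem_compl, Finset.mem_union] at hy; tauto
      change _ = G.fb W p x y
      simp [fb, hxW, hyW]
    · intro F hFW hF
      obtain ⟨w, hw, hwmin⟩ := Finset.exists_min_image F d hF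
      refine ⟨w, hw, ?_⟩
      have hwW := hFW hw
      rw [hW0 w hwW]
      have hpF : p w ∉ F := fun h => absurd (hwmin _ h) (not_le.2 (hp w hwW))
      have h1 : G.fb W p w (p w) = 1 := by simp [fb, hwW]
      have h2 : G.fb W p w (p w) ≤ (G.rb (G.fb W p)).degIn Fᶜ w :=
        Finset.single_le_sum (f := fun y => G.fb W p w y) (fun _ _ => Nat.zero_le _)
          (Finset.mem_compl.2 hpF)
      omega

lemma core_congr {W : Finset α} {c c' : α → ℕ} (h : ∀ x, x ∉ W → c x = c' x)
    (hc : G.Core W c) : G.Core W c' := by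
  intro F hd hs hF
  obtain ⟨x, hx, hlt⟩ := hc F hd hs hF
  exact ⟨x, hx, by rwa [← h x (Finset.disjoint_left.1 hd hx)]⟩

lemma WSs_congr {W : Finset α} {c c' : α → ℕ} (h : ∀ x ∈ W, c x = c' x)
    (hc : G.WSs W c) : G.WSs W c' := by
  intro F hFW hF
  obtain ⟨x, hx, hlt⟩ := hc F hFW hF
  exact ⟨x, hx, by rwa [← h x (hFW hx)]⟩

lemma card_cond (hs : ∀ x y, G.b x y = G.b y x) {W : Finset α} (hWs : G.sink ∉ W)
    (hconn : G.ConnectedOn {x : α | x ∉ W}) {ξ : α → ℕ}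
    (hstable : ∀ x ∈ W, ξ x < G.deg x) (hmin : G.Minimal W ξ) {d : α → ℕ} {p : α → α}
    (hp : ∀ x ∈ W, d (p x) < d x) :
    Nat.card {c : α → ℕ // G.Ss c ∧ EqOn (G.dual c) ξ W}
      = Nat.card {c : α → ℕ // (G.rb (G.fb W p)).Ss c} := by
  obtain ⟨hw, hmax⟩ := G.minimal_wired hWs hconn hmin
  have heq : ∀ c, G.Ss c → EqOn (G.dual c) ξ W → ∀ x ∈ W, c x = G.dual ξ x := by
    intro c hc he x hx
    have hxs : x ≠ G.sink := fun h => hWs (h ▸ hx)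
    have h1 := he x hx
    have h2 := G.Ss_lt hc hxs
    simp only [dual, hxs, if_false] at h1 ⊢
    omega
  apply Nat.card_congr
  refine ⟨fun c => ⟨fun x => if x ∈ W then 0 else c.1 x, ?_⟩,
    fun c => ⟨fun x => if x ∈ W then G.dual ξ x else c.1 x, ?_, ?_⟩, ?_, ?_⟩
  · obtain ⟨c, hc, he⟩ := c
    rw [G.fb_Ss_iff hWs hp]
    refine ⟨by simp [hWs, hc.1], fun x hx => by simp [hx], ?_⟩
    refine G.core_congr (c := c) (fun x hx => by simp [hx]) (G.core_of_Ss hs hWs hc ?_)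
    intro w hwW hbad
    exact hmax w hwW (G.WSs_congr (fun x hx => by rw [heq c hc he x hx]) hbad)
  · obtain ⟨c, hc⟩ := c
    obtain ⟨h0, hW0, hcore⟩ := (G.fb_Ss_iff hWs hp c).1 hc
    apply G.Ss_of_core (W := W)
    · simp [hWs, h0]
    · exact G.core_congr (c := c) (fun x hx => by simp [hx]) hcore
    · exact G.WSs_congr (fun x hx => by simp [hx]) hw
  · intro x hx
    have hxs : x ≠ G.sink := fun h => hWs (h ▸ hx)
    have := hstable x hx
    simp only [dual, hxs, hx, if_true, if_false]
    omega
  · rintro ⟨c, hc, he⟩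
    apply Subtype.ext
    funext x
    by_cases hx : x ∈ W
    · simp [hx, heq c hc he x hx]
    · simp [hx]
  · rintro ⟨c, hc⟩
    obtain ⟨h0, hW0, hcore⟩ := (G.fb_Ss_iff hWs hp c).1 hc
    apply Subtype.ext
    funext x
    by_cases hx : x ∈ W
    · simp [hx, hW0 x hx]
    · simp [hx]
end Graph
end Sandpile

open Sandpile

/-- The probability of a minimal configuration is a determinant of
the matrix `K_G` over a set of edges touching `W`. -/
theorem statement_0 {α : Type*} [Fintype α] [DecidableEq α] (G : Sandpile.Graph α)
    (hG : G.IsSandpileGraph) (W : Finset α) (hWne : W.Nonempty) (hWs : G.sink ∉ W)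
    (hconn : G.ConnectedOn {x : α | x ∉ W}) (ξ : α → ℕ)
    (hstable : ∀ x ∈ W, ξ x < G.deg x) (hmin : G.Minimal W ξ) :
    ∃ 𝓔 : Finset G.OEdge,
      (∀ e ∈ 𝓔, e.1.1 ∈ W ∨ e.1.2.1 ∈ W) ∧
      G.prob (fun η => Graph.EqOn η ξ W) =
        Matrix.det (Matrix.of fun e f : ↥𝓔 => G.Kmat e f) := by
  obtain ⟨hs, hl, hc⟩ := hG
  have hG : G.IsSandpileGraph := ⟨hs, hl, hc⟩
  obtain ⟨d, p, hp0⟩ := G.exists_parent hG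
  have hp : ∀ x ∈ W, 0 < G.b x (p x) ∧ d (p x) < d x :=
    fun x hx => hp0 x (fun h => hWs (h ▸ hx))
  obtain ⟨E, hE, hdet⟩ := G.det_identity hG (G.fb W p) (G.fb_symm hs W p)
    (G.fb_le hs (fun x hx => (hp x hx).1))
  refine ⟨E, ?_, ?_⟩
  · intro e he
    by_contra hcon
    have h1 := hE e he
    simp only [Graph.fb, hcon, if_false] at h1
    exact lt_irrefl _ h1
  · have hR : Nat.card {η : α → ℕ // η G.sink = 0 ∧ G.Recurrent η}
        = Nat.card {c : α → ℕ // G.Ss c} := by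
      have := G.card_rec (fun _ => True)
      simpa only [and_true] using this
    rw [hdet, Graph.prob, G.card_rec, hR,
      G.card_cond hs hWs hconn hstable hmin (fun x hx => (hp x hx).2), G.card_Ss hG,
      (G.rb (G.fb W p)).card_Ss (G.fb_graph hG hWs hconn hp)]
end

section
/- Let G = (V ∪ {s}, E) be a finite sandpile graph, let W ⊆ V be nonempty with the induced subgraph of G on (V ∪ {s}) \ W connected, and let ξ be a minimal configuration on W. Then there exists a finite set 𝓔 of edges of G, each incident to a vertex of W, such that the number of recurrent sandpiles η ∈ R_G with η_W = ξ equals the number of spanning trees of G containing no edge of 𝓔. -/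
open scoped Classical

open Sandpile

namespace SPProof

open Sandpile

set_option linter.unusedSectionVars false

section Main

variable {α : Type*} [Fintype α] [DecidableEq α]

/-- number of edges between `x` and `y` -/
noncomputable def cnt (E : Finset (Sym2 α × ℕ)) (x y : α) : ℕ :=
  (E.filter (fun p => p.1 = s(x, y))).card

noncomputable def dg (E : Finset (Sym2 α × ℕ)) (F : Finset α) (x : α) : ℕ :=
  ∑ y ∈ F, cnt E x y

def Sp (t : Finset (Sym2 α × ℕ)) (S : Finset α) : Prop :=
  ∀ v, ∃ a ∈ S, Relation.ReflTransGen (Graph.edgeRel t) v a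

def RecSet (E : Finset (Sym2 α × ℕ)) (S : Finset α) : Set (α → ℕ) :=
  {η | (∀ x ∈ S, η x = 0) ∧ (∀ x, x ∉ S → η x < dg E Finset.univ x) ∧
    ∀ F : Finset α, F.Nonempty → (∀ x ∈ F, x ∉ S) → ∃ x ∈ F, dg E F x ≤ η x}

def TSet (E : Finset (Sym2 α × ℕ)) (S : Finset α) : Set (Finset (Sym2 α × ℕ)) :=
  {t | t ⊆ E ∧ Sp t S ∧ ∀ p ∈ t, ¬ Sp (t.erase p) S}

lemma edgeRel_symm {t : Finset (Sym2 α × ℕ)} {u v : α} (h : Graph.edgeRel t u v) :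
    Graph.edgeRel t v u := by
  obtain ⟨k, hk⟩ := h
  exact ⟨k, by rwa [Sym2.eq_swap]⟩

lemma reach_symm {t : Finset (Sym2 α × ℕ)} {u v : α}
    (h : Relation.ReflTransGen (Graph.edgeRel t) u v) :
    Relation.ReflTransGen (Graph.edgeRel t) v u := by
  induction h with
  | refl => exact .refl
  | tail _ h ih => exact .head (edgeRel_symm h) ih

lemma edgeRel_mono {t t' : Finset (Sym2 α × ℕ)} (h : t ⊆ t') {u v : α}
    (hr : Relation.ReflTransGen (Graph.edgeRel t) u v) :
    Relation.ReflTransGen (Graph.edgeRel t') u v :=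
  Relation.ReflTransGen.mono (fun _ _ ⟨k, hk⟩ => ⟨k, h hk⟩) _ _ hr

lemma RecSet_finite (E : Finset (Sym2 α × ℕ)) (S : Finset α) : (RecSet E S).Finite := by
  apply Set.Finite.subset (Set.Finite.pi (fun x : α => Set.finite_Iic (dg E Finset.univ x)))
  intro η hη
  simp only [Set.mem_pi, Set.mem_univ, forall_true_left, Set.mem_Iic]
  intro x
  by_cases hx : x ∈ S
  · rw [hη.1 x hx]; exact Nat.zero_le _
  · exact (hη.2.1 x hx).le

lemma TSet_finite (E : Finset (Sym2 α × ℕ)) (S : Finset α) : (TSet E S).Finite := by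
  apply Set.Finite.subset (Finset.finite_toSet E.powerset)
  intro t ht
  simpa using ht.1

/-- contraction for spanning -/
lemma Sp_contract {t : Finset (Sym2 α × ℕ)} {S : Finset α} {a x : α} {k : ℕ} (ha : a ∈ S) :
    Sp (insert (s(a, x), k) t) S ↔ Sp t (insert x S) := by
  constructor
  · intro h v
    obtain ⟨c, hc, hr⟩ := h v
    induction hr using Relation.ReflTransGen.head_induction_on with
    | refl => exact ⟨c, Finset.mem_insert_of_mem hc, .refl⟩
    | head h1 hrest ih =>
      rename_i u w
      obtain ⟨j, hj⟩ := h1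
      rw [Finset.mem_insert] at hj
      rcases hj with hj | hj
      · rw [Prod.mk.injEq, Sym2.eq_iff] at hj
        rcases hj.1 with ⟨rfl, rfl⟩ | ⟨rfl, rfl⟩
        · exact ⟨u, Finset.mem_insert_of_mem ha, .refl⟩
        · exact ⟨u, Finset.mem_insert_self _ _, .refl⟩
      · obtain ⟨d, hd, hr⟩ := ih
        exact ⟨d, hd, .head ⟨j, hj⟩ hr⟩
  · intro h v
    obtain ⟨c, hc, hr⟩ := h v
    have hr' := edgeRel_mono (Finset.subset_insert (s(a, x), k) t) hr
    rw [Finset.mem_insert] at hc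
    rcases hc with rfl | hc
    · exact ⟨a, ha, hr'.tail ⟨k, by rw [Sym2.eq_swap]; exact Finset.mem_insert_self _ _⟩⟩
    · exact ⟨c, hc, hr'⟩

lemma first_edge {t : Finset (Sym2 α × ℕ)} {S : Finset α} {x : α} (hx : x ∉ S) {v c : α}
    (hc : c ∈ S) (hr : Relation.ReflTransGen (Graph.edgeRel t) v c) :
    (v ≠ x ∧ Relation.ReflTransGen (fun u w => u ≠ x ∧ w ≠ x ∧ Graph.edgeRel t u w) v c) ∨
    ∃ y j, (s(x, y), j) ∈ t ∧
      Relation.ReflTransGen (fun u w => u ≠ x ∧ w ≠ x ∧ Graph.edgeRel t u w) y c := by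
  induction hr using Relation.ReflTransGen.head_induction_on with
  | refl => exact Or.inl ⟨fun h => hx (h ▸ hc), .refl⟩
  | head h1 hrest ih =>
    rename_i u w
    rcases ih with ⟨hw, hr⟩ | h
    · by_cases hu : u = x
      · subst hu
        obtain ⟨j, hj⟩ := h1
        exact Or.inr ⟨w, j, hj, hr⟩
      · exact Or.inl ⟨hu, .head ⟨hu, hw, h1⟩ hr⟩
    · exact Or.inr h

/-- if `t` spans to `S` then it is not minimal for `insert x S` -/
lemma not_min {t : Finset (Sym2 α × ℕ)} {S : Finset α} {x : α} (hx : x ∉ S)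
    (h : Sp t S) : ∃ p ∈ t, Sp (t.erase p) (insert x S) := by
  obtain ⟨c, hc, hr⟩ := h x
  rcases first_edge hx hc hr with ⟨h1, _⟩ | ⟨y, j, hj, hy⟩
  · exact absurd rfl h1
  · refine ⟨_, hj, ?_⟩
    have hy' : Relation.ReflTransGen (Graph.edgeRel (t.erase (s(x, y), j))) y c := by
      refine Relation.ReflTransGen.mono ?_ _ _ hy
      rintro u w ⟨hu, hw, i, hi⟩
      refine ⟨i, Finset.mem_erase.2 ⟨?_, hi⟩⟩
      intro he
      rw [Prod.mk.injEq, Sym2.eq_iff] at he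
      rcases he.1 with ⟨h1, _⟩ | ⟨_, h1⟩
      · exact hu h1
      · exact hw h1
    intro v
    obtain ⟨d, hd, hr⟩ := h v
    induction hr using Relation.ReflTransGen.head_induction_on with
    | refl => exact ⟨d, Finset.mem_insert_of_mem hd, .refl⟩
    | head h1 hrest ih =>
      rename_i u w
      obtain ⟨i, hi⟩ := h1
      by_cases he : (s(u, w), i) = (s(x, y), j)
      · rw [Prod.mk.injEq, Sym2.eq_iff] at he
        rcases he.1 with ⟨rfl, _⟩ | ⟨rfl, _⟩
        · exact ⟨u, Finset.mem_insert_self _ _, .refl⟩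
        · exact ⟨c, Finset.mem_insert_of_mem hc, hy'⟩
      · obtain ⟨d', hd', hr'⟩ := ih
        exact ⟨d', hd', .head ⟨i, Finset.mem_erase.2 ⟨he, hi⟩⟩ hr'⟩

lemma TSet_rec {E : Finset (Sym2 α × ℕ)} {S : Finset α} {a x : α} {k : ℕ} (ha : a ∈ S)
    (hx : x ∉ S) (he : (s(a, x), k) ∈ E) :
    (TSet E S).ncard = (TSet (E.erase (s(a, x), k)) S).ncard +
      (TSet (E.erase (s(a, x), k)) (insert x S)).ncard := by
  set e : Sym2 α × ℕ := (s(a, x), k) with hedef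
  have hinj : Set.InjOn (fun t => insert e t) (TSet (E.erase e) (insert x S)) := by
    intro t ht t' ht' h
    have h1 : e ∉ t := fun h => (Finset.mem_erase.1 (ht.1 h)).1 rfl
    have h2 : e ∉ t' := fun h => (Finset.mem_erase.1 (ht'.1 h)).1 rfl
    simp only at h
    rw [← Finset.erase_insert h1, ← Finset.erase_insert h2, h]
  rw [← hinj.ncard_image, ← Set.ncard_union_eq ?_ (TSet_finite _ _)
    ((TSet_finite _ _).image _)]
  · congr 1
    ext t
    constructor
    · intro ht
      by_cases het : e ∈ t
      · right
        refine ⟨t.erase e, ⟨Finset.erase_subset_erase _ ht.1, ?_, ?_⟩, Finset.insert_erase het⟩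
        · rw [← Sp_contract (k := k) ha, ← hedef, Finset.insert_erase het]; exact ht.2.1
        · intro p hp h
          have hp' := Finset.mem_erase.1 hp
          apply ht.2.2 p hp'.2
          rw [← Sp_contract (k := k) ha, ← hedef, Finset.erase_right_comm, Finset.insert_erase
            (Finset.mem_erase.2 ⟨hp'.1.symm, het⟩)] at h
          exact h
      · left
        refine ⟨?_, ht.2⟩
        intro p hp
        exact Finset.mem_erase.2 ⟨fun h => het (h ▸ hp), ht.1 hp⟩
    · rintro (ht | ⟨t, ht, rfl⟩)
      · exact ⟨ht.1.trans (Finset.erase_subset _ _), ht.2⟩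
      · have h1 : e ∉ t := fun h => (Finset.mem_erase.1 (ht.1 h)).1 rfl
        refine ⟨?_, ?_, ?_⟩
        · exact Finset.insert_subset he (ht.1.trans (Finset.erase_subset _ _))
        · exact (Sp_contract ha).2 ht.2.1
        · intro p hp h
          by_cases hpe : p = e
          · subst hpe
            rw [Finset.erase_insert h1] at h
            obtain ⟨q, hq, hq'⟩ := not_min hx h
            exact ht.2.2 q hq hq'
          · have hpt : p ∈ t := (Finset.mem_insert.1 hp).resolve_left hpe
            rw [Finset.erase_insert_of_ne (Ne.symm hpe)] at h
            exact ht.2.2 p hpt ((Sp_contract ha).1 h)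
  · rw [Set.disjoint_left]
    rintro _ ht ⟨t, _, rfl⟩
    exact (Finset.mem_erase.1 (ht.1 (Finset.mem_insert_self e t))).1 rfl

lemma cnt_erase {E : Finset (Sym2 α × ℕ)} {e : Sym2 α × ℕ} (he : e ∈ E) (x y : α) :
    cnt E x y = cnt (E.erase e) x y + if e.1 = s(x, y) then 1 else 0 := by
  unfold cnt
  conv_lhs => rw [← Finset.insert_erase he]
  rw [Finset.filter_insert]
  split_ifs with h
  · rw [Finset.card_insert_of_notMem (by simp)]
  · simp

lemma dg_mono {E : Finset (Sym2 α × ℕ)} {F F' : Finset α} (h : F ⊆ F') (x : α) :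
    dg E F x ≤ dg E F' x := Finset.sum_le_sum_of_subset h

/-- erasing an edge `a x` doesn't change degrees towards sets `F` avoiding `a`, or at vertices
other than the endpoints -/
lemma dg_erase_of_notMem {E : Finset (Sym2 α × ℕ)} {a x : α} {k : ℕ} (he : (s(a, x), k) ∈ E)
    {F : Finset α} {z : α} (ha : a ∉ F) (hza : z ≠ a) :
    dg (E.erase (s(a, x), k)) F z = dg E F z := by
  unfold dg
  refine Finset.sum_congr rfl fun y hy => ?_
  rw [cnt_erase he, if_neg]
  · rfl
  · intro h
    rw [Sym2.eq_iff] at h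
    rcases h with ⟨h, _⟩ | ⟨h, _⟩
    · exact hza h.symm
    · exact ha (h ▸ hy)

lemma dg_erase_of_ne {E : Finset (Sym2 α × ℕ)} {a x : α} {k : ℕ} (he : (s(a, x), k) ∈ E)
    {F : Finset α} {z : α} (hzx : z ≠ x) (hza : z ≠ a) :
    dg (E.erase (s(a, x), k)) F z = dg E F z := by
  unfold dg
  refine Finset.sum_congr rfl fun y hy => ?_
  rw [cnt_erase he, if_neg]
  · rfl
  · intro h
    rw [Sym2.eq_iff] at h
    rcases h with ⟨h, _⟩ | ⟨_, h⟩
    · exact hza h.symm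
    · exact hzx h.symm

lemma dg_erase_self {E : Finset (Sym2 α × ℕ)} {a x : α} {k : ℕ} (he : (s(a, x), k) ∈ E)
    (hax : x ≠ a) :
    dg E Finset.univ x = dg (E.erase (s(a, x), k)) Finset.univ x + 1 := by
  unfold dg
  rw [Finset.sum_congr rfl (fun y _ => cnt_erase he x y), Finset.sum_add_distrib]
  congr 1
  rw [Finset.sum_eq_single a]
  · simp [Sym2.eq_swap]
  · intro b _ hb
    rw [if_neg]
    intro h
    rw [Sym2.eq_iff] at h
    rcases h with ⟨h, _⟩ | ⟨h, _⟩
    · exact hax h.symm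
    · exact hb h.symm
  · simp

lemma RecSet_rec {E : Finset (Sym2 α × ℕ)} {S : Finset α} {a x : α} {k : ℕ} (ha : a ∈ S)
    (hx : x ∉ S) (he : (s(a, x), k) ∈ E) :
    (RecSet E S).ncard = (RecSet (E.erase (s(a, x), k)) S).ncard +
      (RecSet (E.erase (s(a, x), k)) (insert x S)).ncard := by
  have hax : x ≠ a := fun h => hx (h ▸ ha)
  have hself := dg_erase_self he hax
  set E0 := E.erase (s(a, x), k) with hE0
  set f : (α → ℕ) → (α → ℕ) := fun η => Function.update η x (dg E0 Finset.univ x) with hf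
  have hinj : Set.InjOn f (RecSet E0 (insert x S)) := by
    intro η hη η' hη' h
    funext z
    by_cases hz : z = x
    · subst hz
      rw [hη.1 z (Finset.mem_insert_self _ _), hη'.1 z (Finset.mem_insert_self _ _)]
    · have := congrFun h z
      simpa [hf, Function.update_of_ne hz] using this
  rw [← hinj.ncard_image, ← Set.ncard_union_eq ?_ (RecSet_finite _ _)
    ((RecSet_finite _ _).image _)]
  · congr 1
    have hamp : ∀ F : Finset α, (∀ z ∈ F, z ∉ S) → ∀ z ∈ F, dg E0 F z = dg E F z := by
      intro F hF z hz
      exact dg_erase_of_notMem he (fun h => hF a h ha) (fun h => hF z hz (h ▸ ha))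
    ext η
    constructor
    · intro hη
      by_cases hlt : η x < dg E0 Finset.univ x
      · left
        refine ⟨hη.1, ?_, ?_⟩
        · intro z hz
          by_cases hzx : z = x
          · rw [hzx]; exact hlt
          · rw [dg_erase_of_ne he hzx (fun h => hz (h ▸ ha))]
            exact hη.2.1 z hz
        · intro F hF hFS
          obtain ⟨z, hz, h⟩ := hη.2.2 F hF hFS
          exact ⟨z, hz, by rw [hamp F hFS z hz]; exact h⟩
      · right
        have h1 := hη.2.1 x hx
        have h2 : η x = dg E0 Finset.univ x := by omega
        refine ⟨Function.update η x 0, ⟨?_, ?_, ?_⟩, ?_⟩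
        · intro z hz
          by_cases hzx : z = x
          · simp [hzx]
          · rw [Function.update_of_ne hzx]
            exact hη.1 z ((Finset.mem_insert.1 hz).resolve_left hzx)
        · intro z hz
          rw [Finset.mem_insert, not_or] at hz
          rw [Function.update_of_ne hz.1, dg_erase_of_ne he hz.1 (fun h => hz.2 (h ▸ ha))]
          exact hη.2.1 z hz.2
        · intro F hF hFS
          have hFS' : ∀ z ∈ F, z ∉ S := fun z hz h => hFS z hz (Finset.mem_insert_of_mem h)
          obtain ⟨z, hz, h⟩ := hη.2.2 F hF hFS'
          refine ⟨z, hz, ?_⟩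
          have hzx : z ≠ x := fun h => hFS z hz (h ▸ Finset.mem_insert_self _ _)
          rw [Function.update_of_ne hzx, hamp F hFS' z hz]
          exact h
        · simp [hf, ← h2]
    · rintro (hη | ⟨η, hη, rfl⟩)
      · refine ⟨hη.1, ?_, ?_⟩
        · intro z hz
          have := hη.2.1 z hz
          by_cases hzx : z = x
          · subst hzx; omega
          · rwa [dg_erase_of_ne he hzx (fun h => hz (h ▸ ha))] at this
        · intro F hF hFS
          obtain ⟨z, hz, h⟩ := hη.2.2 F hF hFS
          exact ⟨z, hz, by rw [← hamp F hFS z hz]; exact h⟩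
      · refine ⟨?_, ?_, ?_⟩
        · intro z hz
          have hzx : z ≠ x := fun h => hx (h ▸ hz)
          simp only [hf, Function.update_of_ne hzx]
          exact hη.1 z (Finset.mem_insert_of_mem hz)
        · intro z hz
          by_cases hzx : z = x
          · subst hzx; simp [hf, hself]
          · simp only [hf, Function.update_of_ne hzx]
            rw [← dg_erase_of_ne he hzx (fun h => hz (h ▸ ha))]
            exact hη.2.1 z (by simp [hzx, hz])
        · intro F hF hFS
          by_cases hxF : x ∈ F
          · refine ⟨x, hxF, ?_⟩
            rw [← hamp F hFS x hxF]
            simp only [hf, Function.update_self]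
            exact dg_mono (Finset.subset_univ _) _
          · obtain ⟨z, hz, h⟩ := hη.2.2 F hF (by
              intro z hz h
              rcases Finset.mem_insert.1 h with h | h
              · exact hxF (h ▸ hz)
              · exact hFS z hz h)
            have hzx : z ≠ x := fun h => hxF (h ▸ hz)
            refine ⟨z, hz, ?_⟩
            simp only [hf, Function.update_of_ne hzx]
            rw [← hamp F hFS z hz]
            exact h
  · rw [Set.disjoint_left]
    rintro _ hη ⟨η, _, rfl⟩
    have := hη.2.1 x hx
    simp [hf] at this

/-- recurrent configurations and spanning forests are equinumerous -/
theorem rec_eq_tree (n : ℕ) : ∀ (E : Finset (Sym2 α × ℕ)) (S : Finset α), E.card = n →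
    (RecSet E S).ncard = (TSet E S).ncard := by
  induction n using Nat.strong_induction_on with
  | _ n ih =>
    intro E S hn
    by_cases h : ∃ a x k, a ∈ S ∧ x ∉ S ∧ (s(a, x), k) ∈ E
    · obtain ⟨a, x, k, ha, hx, he⟩ := h
      rw [TSet_rec ha hx he, RecSet_rec ha hx he]
      have hlt : (E.erase (s(a, x), k)).card < n := hn ▸ Finset.card_erase_lt_of_mem he
      rw [ih _ hlt _ _ rfl, ih _ hlt _ _ rfl]
    · push Not at h
      by_cases hS : S = Finset.univ
      · subst hS
        have h1 : RecSet E Finset.univ = {fun _ => 0} := by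
          ext η
          simp only [Set.mem_singleton_iff]
          constructor
          · intro hη; funext z; exact hη.1 z (Finset.mem_univ _)
          · rintro rfl
            refine ⟨fun _ _ => rfl, fun x hx => absurd (Finset.mem_univ x) hx, ?_⟩
            intro F ⟨z, hz⟩ hF
            exact absurd (Finset.mem_univ z) (hF z hz)
        have hsp : ∀ t : Finset (Sym2 α × ℕ), Sp t Finset.univ :=
          fun t v => ⟨v, Finset.mem_univ _, .refl⟩
        have h2 : TSet E Finset.univ = {∅} := by
          ext t
          simp only [Set.mem_singleton_iff]
          constructor
          · intro ht
            apply Finset.eq_empty_of_forall_notMem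
            intro p hp
            exact ht.2.2 p hp (hsp _)
          · rintro rfl
            exact ⟨by simp, hsp _, by simp⟩
        rw [h1, h2]; simp
      · obtain ⟨x, hx⟩ : ∃ x, x ∉ S := by
          by_contra hc; push Not at hc
          exact hS (Finset.eq_univ_iff_forall.2 hc)
        have h1 : RecSet E S = ∅ := by
          ext η
          simp only [Set.mem_empty_iff_false, iff_false]
          intro hη
          obtain ⟨z, hz, hle⟩ := hη.2.2 (Finset.univ \ S) ⟨x, by simp [hx]⟩ (by simp)
          have hzS : z ∉ S := by simpa using hz
          have hlt := hη.2.1 z hzS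
          have : dg E Finset.univ z = dg E (Finset.univ \ S) z := by
            unfold dg
            symm
            apply Finset.sum_subset (Finset.subset_univ _)
            intro y _ hy
            have hy : y ∈ S := by simpa using hy
            unfold cnt
            rw [Finset.card_eq_zero, Finset.filter_eq_empty_iff]
            rintro ⟨p, k⟩ hp hpe
            simp only at hpe
            subst hpe
            rw [Sym2.eq_swap] at hp
            exact h y z k hy hzS hp
          omega
        have h2 : TSet E S = ∅ := by
          ext t
          simp only [Set.mem_empty_iff_false, iff_false]
          intro ht
          obtain ⟨c, hc, hr⟩ := ht.2.1 x
          have : x ∈ S := by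
            clear hx
            induction hr using Relation.ReflTransGen.head_induction_on with
            | refl => exact hc
            | head h1 hrest ih' =>
              rename_i u w
              obtain ⟨j, hj⟩ := h1
              by_contra hu
              rw [Sym2.eq_swap] at hj
              exact h w u j ih' hu (ht.1 hj)
          exact hx this
        rw [h1, h2]; simp

/-- no edge of `B` touches `z` -/
def Avoids (B : Finset (Sym2 α × ℕ)) (z : α) : Prop := ∀ p ∈ B, z ∉ p.1

lemma Sp_leaf {t : Finset (Sym2 α × ℕ)} {S : Finset α} {z p : α} {k : ℕ} (hz : z ∉ S)
    (hzp : z ≠ p) (ht : Avoids t z) :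
    Sp (insert (s(z, p), k) t) S ↔ Sp t (insert z S) := by
  constructor
  · intro h v
    obtain ⟨c, hc, hr⟩ := h v
    have key : ∃ d ∈ S, Relation.ReflTransGen (Graph.edgeRel t) (if v = z then p else v) d := by
      induction hr using Relation.ReflTransGen.head_induction_on with
      | refl => exact ⟨c, hc, by rw [if_neg (fun h : c = z => hz (h ▸ hc))]⟩
      | head h1 hrest ih =>
        rename_i u w
        obtain ⟨d, hd, hr⟩ := ih
        obtain ⟨j, hj⟩ := h1
        rw [Finset.mem_insert] at hj
        rcases hj with hj | hj
        · rw [Prod.mk.injEq, Sym2.eq_iff] at hj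
          rcases hj.1 with ⟨rfl, rfl⟩ | ⟨rfl, rfl⟩
          · exact ⟨d, hd, by rw [if_neg hzp.symm] at hr; simpa using hr⟩
          · exact ⟨d, hd, by rw [if_neg hzp.symm]; simpa using hr⟩
        · have h1 := ht _ hj
          simp only [Sym2.mem_iff, not_or] at h1
          rw [if_neg (Ne.symm h1.2)] at hr
          rw [if_neg (Ne.symm h1.1)]
          exact ⟨d, hd, .head ⟨j, hj⟩ hr⟩
    by_cases hv : v = z
    · exact ⟨z, Finset.mem_insert_self _ _, hv ▸ .refl⟩
    · rw [if_neg hv] at key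
      obtain ⟨d, hd, hr⟩ := key
      exact ⟨d, Finset.mem_insert_of_mem hd, hr⟩
  · intro h
    have key : ∀ v, v ≠ z → ∃ c ∈ S,
        Relation.ReflTransGen (Graph.edgeRel (insert (s(z, p), k) t)) v c := by
      intro v hv
      obtain ⟨c, hc, hr⟩ := h v
      have hcz : c ≠ z := by
        clear hc
        induction hr with
        | refl => exact hv
        | tail _ h1 _ =>
          obtain ⟨j, hj⟩ := h1
          have h1 := ht _ hj
          simp only [Sym2.mem_iff, not_or] at h1
          exact Ne.symm h1.2
      exact ⟨c, (Finset.mem_insert.1 hc).resolve_left hcz,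
        edgeRel_mono (Finset.subset_insert _ _) hr⟩
    intro v
    by_cases hv : v = z
    · subst hv
      obtain ⟨c, hc, hr⟩ := key p hzp.symm
      exact ⟨c, hc, .head ⟨k, Finset.mem_insert_self _ _⟩ hr⟩
    · exact key v hv

lemma TSet_leaf {B : Finset (Sym2 α × ℕ)} {S : Finset α} {z p : α} {k : ℕ} (hz : z ∉ S)
    (hzp : z ≠ p) (hB : Avoids B z) :
    (TSet (insert (s(z, p), k) B) S).ncard = (TSet B (insert z S)).ncard := by
  set e : Sym2 α × ℕ := (s(z, p), k) with hedef
  have heB : e ∉ B := fun h => hB _ h (by simp [hedef])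
  have hAv : ∀ t, t ⊆ B → Avoids t z := fun t ht p hp => hB p (ht hp)
  have hinj : Set.InjOn (fun t => insert e t) (TSet B (insert z S)) := by
    intro t ht t' ht' h
    have h1 : e ∉ t := fun h => heB (ht.1 h)
    have h2 : e ∉ t' := fun h => heB (ht'.1 h)
    simp only at h
    rw [← Finset.erase_insert h1, ← Finset.erase_insert h2, h]
  have hnot : ∀ t, t ⊆ B → ¬ Sp t S := by
    intro t ht h
    obtain ⟨c, hc, hr⟩ := h z
    rcases Relation.ReflTransGen.cases_head hr with h1 | ⟨w, ⟨j, hj⟩, _⟩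
    · exact hz (h1 ▸ hc)
    · exact hAv t ht _ hj (by simp)
  rw [← hinj.ncard_image]
  congr 1
  ext t
  constructor
  · intro ht
    have het : e ∈ t := by
      by_contra het
      exact hnot t ((Finset.subset_insert_iff_of_notMem het).1 ht.1) ht.2.1
    have hsub : t.erase e ⊆ B := Finset.subset_insert_iff.1 ht.1
    refine ⟨t.erase e, ⟨hsub, ?_, ?_⟩, Finset.insert_erase het⟩
    · rw [← Sp_leaf (k := k) hz hzp (hAv _ hsub), ← hedef, Finset.insert_erase het]
      exact ht.2.1
    · intro q hq h
      have hq' := Finset.mem_erase.1 hq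
      apply ht.2.2 q hq'.2
      rw [← Sp_leaf (k := k) hz hzp (hAv _ ((Finset.erase_subset _ _).trans hsub)), ← hedef,
        Finset.erase_right_comm, Finset.insert_erase
        (Finset.mem_erase.2 ⟨hq'.1.symm, het⟩)] at h
      exact h
  · rintro ⟨t, ht, rfl⟩
    have h1 : e ∉ t := fun h => heB (ht.1 h)
    refine ⟨Finset.insert_subset_insert _ ht.1, (Sp_leaf hz hzp (hAv _ ht.1)).2 ht.2.1, ?_⟩
    intro q hq h
    by_cases hqe : q = e
    · subst hqe
      rw [Finset.erase_insert h1] at h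
      exact hnot t ht.1 h
    · have hqt : q ∈ t := (Finset.mem_insert.1 hq).resolve_left hqe
      rw [Finset.erase_insert_of_ne (Ne.symm hqe)] at h
      exact ht.2.2 q hqt ((Sp_leaf hz hzp (hAv _ ((Finset.erase_subset _ _).trans ht.1))).1 h)

end Main

end SPProof

namespace SPProof

open Sandpile

section Final

variable {α : Type*} [Fintype α] [DecidableEq α]

noncomputable def EG (G : Graph α) : Finset (Sym2 α × ℕ) :=
  (Finset.univ : Finset (α × α)).biUnion
    (fun q => (Finset.range (G.b q.1 q.2)).image (fun k => (s(q.1, q.2), k)))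

lemma mem_EG (G : Graph α) (p : Sym2 α × ℕ) :
    p ∈ EG G ↔ ∃ x y : α, p.1 = s(x, y) ∧ p.2 < G.b x y := by
  unfold EG
  simp only [Finset.mem_biUnion, Finset.mem_univ, true_and, Finset.mem_image, Finset.mem_range,
    Prod.exists]
  constructor
  · rintro ⟨x, y, k, hk, rfl⟩
    exact ⟨x, y, rfl, hk⟩
  · rintro ⟨x, y, h1, h2⟩
    exact ⟨x, y, p.2, h2, by rw [← h1]⟩

lemma mem_EG' {G : Graph α} (hG : G.IsSandpileGraph) (x y : α) (k : ℕ) :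
    (s(x, y), k) ∈ EG G ↔ k < G.b x y := by
  rw [mem_EG]
  constructor
  · rintro ⟨u, v, h1, h2⟩
    simp only [Sym2.eq_iff] at h1
    rcases h1 with ⟨rfl, rfl⟩ | ⟨rfl, rfl⟩
    · exact h2
    · rw [hG.1]; exact h2
  · intro h
    exact ⟨x, y, rfl, h⟩

lemma cnt_of_subset {G : Graph α} (hG : G.IsSandpileGraph) {E : Finset (Sym2 α × ℕ)} (x y : α)
    (h : ∀ k, (s(x, y), k) ∈ E ↔ (s(x, y), k) ∈ EG G) : cnt E x y = G.b x y := by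
  unfold cnt
  have : E.filter (fun p => p.1 = s(x, y)) =
      (Finset.range (G.b x y)).image (fun k => (s(x, y), k)) := by
    ext ⟨q, k⟩
    simp only [Finset.mem_filter, Finset.mem_image, Finset.mem_range, Prod.mk.injEq]
    constructor
    · rintro ⟨h1, rfl⟩
      exact ⟨k, (mem_EG' hG x y k).1 ((h k).1 h1), rfl, rfl⟩
    · rintro ⟨j, hj, rfl, rfl⟩
      exact ⟨(h j).2 ((mem_EG' hG x y j).2 hj), rfl⟩
  rw [this, Finset.card_image_of_injective, Finset.card_range]
  intro a b hab
  simpa using hab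

inductive Chain (G : Graph α) (ξ : α → ℕ) : Finset α → Prop
  | empty : Chain G ξ ∅
  | step (U : Finset α) (z : α) : Chain G ξ U → z ∉ U → ξ z = G.degIn U z →
      Chain G ξ (insert z U)

lemma degIn_mono (G : Graph α) {F F' : Finset α} (h : F ⊆ F') (x : α) :
    G.degIn F x ≤ G.degIn F' x := Finset.sum_le_sum_of_subset h

lemma degIn_insert_self {G : Graph α} (hG : G.IsSandpileGraph) {U : Finset α} {z : α} :
    G.degIn (insert z U) z = G.degIn U z := by
  unfold Graph.degIn
  by_cases h : z ∈ U
  · rw [Finset.insert_eq_of_mem h]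
  · rw [Finset.sum_insert h, hG.2.1, zero_add]

lemma chain_of_min {G : Graph α} (hG : G.IsSandpileGraph) {ξ : α → ℕ} (n : ℕ) :
    ∀ U : Finset α, U.card = n →
    (∀ F ⊆ U, F.Nonempty → ∃ x ∈ F, G.degIn F x ≤ ξ x) →
    (∀ w ∈ U, 1 ≤ ξ w → ¬ ∀ F ⊆ U, F.Nonempty → ∃ x ∈ F, G.degIn F x ≤ Graph.SubOne ξ w x) →
    Chain G ξ U := by
  induction n with
  | zero =>
    intro U hU _ _
    rw [Finset.card_eq_zero.1 hU]
    exact .empty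
  | succ n ih =>
    intro U hU hamp hmin
    have hne : U.Nonempty := Finset.card_pos.1 (by omega)
    obtain ⟨z, hz, hle⟩ := hamp U (Finset.Subset.refl _) hne
    have heq : ξ z = G.degIn U z := by
      by_contra hneq
      refine hmin z hz (by omega) ?_
      intro F hF hFne
      by_cases hzF : z ∈ F
      · refine ⟨z, hzF, ?_⟩
        have := degIn_mono G hF z
        simp only [Graph.SubOne, if_true]
        omega
      · obtain ⟨x, hx, h⟩ := hamp F hF hFne
        refine ⟨x, hx, ?_⟩
        simp only [Graph.SubOne, if_neg (fun h : x = z => hzF (h ▸ hx))]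
        exact h
    have hch : Chain G ξ (U.erase z) := by
      apply ih
      · rw [Finset.card_erase_of_mem hz, hU]; rfl
      · intro F hF hFne
        exact hamp F (hF.trans (Finset.erase_subset _ _)) hFne
      · intro w hw h1 hcon
        have hw' := Finset.mem_erase.1 hw
        refine hmin w hw'.2 h1 ?_
        intro F hF hFne
        by_cases hzF : z ∈ F
        · refine ⟨z, hzF, ?_⟩
          simp only [Graph.SubOne, if_neg hw'.1.symm]
          exact (degIn_mono G hF z).trans hle
        · exact hcon F (fun x hx => Finset.mem_erase.2 ⟨fun h => hzF (h ▸ hx), hF hx⟩) hFne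
    rw [← Finset.insert_erase hz]
    refine .step _ _ hch (by simp) ?_
    rw [heq]
    conv_lhs => rw [← Finset.insert_erase hz]
    exact degIn_insert_self hG

def RU (G : Graph α) (U : Finset α) (η : α → ℕ) : Prop :=
  ∀ F : Finset α, F.Nonempty → (∀ x ∈ F, x ≠ G.sink ∧ x ∉ U) → ∃ x ∈ F, G.degIn (F ∪ U) x ≤ η x

lemma RU_step {G : Graph α} (hG : G.IsSandpileGraph) {U : Finset α} {z : α} (hz : z ∉ U)
    (hzs : z ≠ G.sink) {η : α → ℕ} (hη : η z = G.degIn U z) :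
    RU G U η ↔ RU G (insert z U) η := by
  constructor
  · intro h F hF hFd
    have hzF : z ∉ F := fun hm => (hFd z hm).2 (Finset.mem_insert_self _ _)
    have hFd' : ∀ x ∈ F, x ≠ G.sink ∧ x ∉ U := fun x hx =>
      ⟨(hFd x hx).1, fun hm => (hFd x hx).2 (Finset.mem_insert_of_mem hm)⟩
    by_cases hedge : ∃ x ∈ F, 0 < G.b z x
    · obtain ⟨x0, hx0, hb⟩ := hedge
      obtain ⟨x, hx, hle⟩ := h (insert z F) ⟨z, Finset.mem_insert_self _ _⟩ (by
        intro x hx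
        rcases Finset.mem_insert.1 hx with rfl | hx
        · exact ⟨hzs, hz⟩
        · exact hFd' x hx)
      have hset : insert z F ∪ U = F ∪ insert z U := by
        ext y; simp only [Finset.mem_union, Finset.mem_insert]; tauto
      rcases Finset.mem_insert.1 hx with rfl | hx
      · exfalso
        have h1 : G.degIn (insert x0 U) x ≤ G.degIn (insert x F ∪ U) x := by
          apply degIn_mono
          intro y hy
          rcases Finset.mem_insert.1 hy with rfl | hy
          · simp [hx0]
          · simp [hy]
        have h2 : G.degIn (insert x0 U) x = G.b x x0 + G.degIn U x := by
          unfold Graph.degIn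
          rw [Finset.sum_insert (hFd' x0 hx0).2]
        omega
      · exact ⟨x, hx, by rw [← hset]; exact hle⟩
    · push Not at hedge
      obtain ⟨x, hx, hle⟩ := h F hF hFd'
      refine ⟨x, hx, ?_⟩
      have : F ∪ insert z U = insert z (F ∪ U) := by
        ext y; simp only [Finset.mem_union, Finset.mem_insert]; tauto
      rw [this]
      unfold Graph.degIn at hle ⊢
      rw [Finset.sum_insert (by simp [hzF, hz]), hG.1 x z]
      have := hedge x hx
      omega
  · intro h F hF hFd
    by_cases hne : (F.erase z).Nonempty
    · obtain ⟨x, hx, hle⟩ := h (F.erase z) hne (by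
        intro x hx
        have hx' := Finset.mem_erase.1 hx
        refine ⟨(hFd x hx'.2).1, ?_⟩
        rw [Finset.mem_insert, not_or]
        exact ⟨hx'.1, (hFd x hx'.2).2⟩)
      refine ⟨x, (Finset.mem_erase.1 hx).2, le_trans (degIn_mono G ?_ x) hle⟩
      intro y hy
      simp only [Finset.mem_union, Finset.mem_insert, Finset.mem_erase] at hy ⊢
      tauto
    · rw [Finset.not_nonempty_iff_eq_empty] at hne
      have hFz : F = {z} := by
        rcases Finset.erase_eq_empty_iff F z |>.1 hne with h1 | h1
        · exact absurd h1 hF.ne_empty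
        · exact h1
      subst hFz
      refine ⟨z, Finset.mem_singleton_self _, ?_⟩
      rw [← Finset.insert_eq, degIn_insert_self hG, hη]

lemma RU_chain {G : Graph α} (hG : G.IsSandpileGraph) {ξ : α → ℕ} {U : Finset α}
    (hch : Chain G ξ U) (hs : G.sink ∉ U) {η : α → ℕ} (hη : ∀ x ∈ U, η x = ξ x) :
    RU G ∅ η ↔ RU G U η := by
  induction hch with
  | empty => rfl
  | step U z _ hz hξ ih =>
    rw [Finset.mem_insert, not_or] at hs
    rw [ih hs.2 (fun x hx => hη x (Finset.mem_insert_of_mem hx))]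
    exact RU_step hG hz (Ne.symm hs.1) (by rw [hη z (Finset.mem_insert_self _ _), hξ])

lemma tree_chain {G : Graph α} (hG : G.IsSandpileGraph) {ξ : α → ℕ} {U : Finset α}
    (hch : Chain G ξ U) (hs : G.sink ∉ U) (hst : ∀ x ∈ U, ξ x < G.deg x) :
    ∃ K : Finset (Sym2 α × ℕ), (∀ p ∈ K, p ∈ EG G ∧ ∃ u ∈ U, u ∈ p.1) ∧
      ∀ B : Finset (Sym2 α × ℕ), (∀ u ∈ U, Avoids B u) →
        (TSet (B ∪ K) {G.sink}).ncard = (TSet B (insert G.sink U)).ncard := by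
  induction hch with
  | empty => exact ⟨∅, by simp, by simp⟩
  | step U z _ hz hξ ih =>
    rw [Finset.mem_insert, not_or] at hs
    obtain ⟨K, hK1, hK2⟩ := ih hs.2 (fun x hx => hst x (Finset.mem_insert_of_mem hx))
    have hlt := hst z (Finset.mem_insert_self _ _)
    obtain ⟨p, hpU, hp⟩ : ∃ p, p ∉ U ∧ 0 < G.b z p := by
      by_contra hcon
      push Not at hcon
      have : G.degIn U z = G.deg z := by
        unfold Graph.degIn Graph.deg
        apply Finset.sum_subset (Finset.subset_univ _)
        intro y _ hy
        have := hcon y hy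
        omega
      omega
    have hzp : z ≠ p := by
      rintro rfl
      rw [hG.2.1] at hp
      exact absurd hp (lt_irrefl _)
    refine ⟨insert (s(z, p), 0) K, ?_, ?_⟩
    · intro q hq
      rcases Finset.mem_insert.1 hq with rfl | hq
      · exact ⟨(mem_EG' hG z p 0).2 hp, z, Finset.mem_insert_self _ _, by simp⟩
      · obtain ⟨h1, u, hu, h2⟩ := hK1 q hq
        exact ⟨h1, u, Finset.mem_insert_of_mem hu, h2⟩
    · intro B hB
      have hset : B ∪ insert (s(z, p), 0) K = insert (s(z, p), 0) B ∪ K := by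
        rw [Finset.union_insert, Finset.insert_union]
      rw [hset, hK2, TSet_leaf _ hzp (hB z (Finset.mem_insert_self _ _)), Finset.insert_comm]
      · rw [Finset.mem_insert, not_or]
        exact ⟨Ne.symm hs.1, hz⟩
      · intro u hu q hq
        rcases Finset.mem_insert.1 hq with rfl | hq
        · simp only [Sym2.mem_iff, not_or]
          exact ⟨fun h => hz (h ▸ hu), fun h => hpU (h ▸ hu)⟩
        · exact hB u (Finset.mem_insert_of_mem hu) q hq

lemma spanningTree_iff (G : Graph α) (t C : Finset (Sym2 α × ℕ)) :
    (G.IsSpanningTree t ∧ ∀ p ∈ C, p ∉ t) ↔ t ∈ TSet (EG G \ C) {G.sink} := by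
  have hsp : ∀ t : Finset (Sym2 α × ℕ), Sp t {G.sink} ↔
      ∀ u v : α, Relation.ReflTransGen (Graph.edgeRel t) u v := by
    intro t
    constructor
    · intro h u v
      obtain ⟨a, ha, hr⟩ := h u
      obtain ⟨b, hb, hr'⟩ := h v
      rw [Finset.mem_singleton] at ha hb
      subst ha; subst hb
      exact hr.trans (reach_symm hr')
    · intro h u
      exact ⟨G.sink, Finset.mem_singleton_self _, h _ _⟩
  constructor
  · rintro ⟨⟨h1, h2, h3⟩, h4⟩
    refine ⟨?_, (hsp t).2 h2, ?_⟩
    · intro p hp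
      exact Finset.mem_sdiff.2 ⟨(mem_EG G p).2 (h1 p hp), fun h => h4 p h hp⟩
    · intro p hp h
      obtain ⟨x, y, hxy, _⟩ := h1 p hp
      exact h3 p hp x y hxy ((hsp _).1 h x y)
  · rintro ⟨h1, h2, h3⟩
    refine ⟨⟨?_, (hsp t).1 h2, ?_⟩, ?_⟩
    · intro p hp
      exact (mem_EG G p).1 (Finset.mem_sdiff.1 (h1 hp)).1
    · intro p hp x y hxy hr
      apply h3 p hp
      rw [hsp]
      intro u v
      have huv := (hsp t).1 h2 u v
      induction huv with
      | refl => exact .refl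
      | tail _ hstep ih =>
        rename_i b c hub
        refine ih.trans ?_
        obtain ⟨j, hj⟩ := hstep
        by_cases he : (s(b, c), j) = p
        · subst he
          simp only [Sym2.eq_iff] at hxy
          rcases hxy with ⟨rfl, rfl⟩ | ⟨rfl, rfl⟩
          · exact hr
          · exact reach_symm hr
        · exact .single ⟨j, Finset.mem_erase.2 ⟨he, hj⟩⟩
    · intro p hp hpt
      exact (Finset.mem_sdiff.1 (h1 hpt)).2 hp

lemma recurrent_iff (G : Graph α) (η : α → ℕ) :
    G.Recurrent η ↔ (∀ x, x ≠ G.sink → η x < G.deg x) ∧ RU G ∅ η := by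
  unfold Graph.Recurrent Graph.Stable RU Graph.AmpleFor Graph.VSet
  simp only [Finset.mem_erase, Finset.mem_univ, and_true, Finset.union_empty,
    Finset.notMem_empty, not_false_eq_true]
  refine and_congr_right fun _ => forall_congr' fun F => ?_
  constructor
  · intro h h1 h2
    exact h (fun x hx => Finset.mem_erase.2 ⟨h2 x hx, Finset.mem_univ _⟩) h1
  · intro h h1 h2
    exact h h2 (fun x hx => (Finset.mem_erase.1 (h1 hx)).1)

/-- from minimality on `W` to the chain structure, using connectivity of the complement -/
lemma chain_W {G : Graph α} (hG : G.IsSandpileGraph) {W : Finset α} (hWs : G.sink ∉ W)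
    (hconn : G.ConnectedOn {x : α | x ∉ W}) {ξ : α → ℕ}
    (hstable : ∀ x ∈ W, ξ x < G.deg x) (hmin : G.Minimal W ξ) : Chain G ξ W := by
  have hamp : ∀ F ⊆ W, F.Nonempty → ∃ x ∈ F, G.degIn F x ≤ ξ x := by
    obtain ⟨⟨η, hη, hE⟩, _⟩ := hmin
    intro F hF hne
    obtain ⟨x, hx, h⟩ := hη.2 F (by
      intro x hx
      exact Finset.mem_erase.2 ⟨fun h => hWs (h ▸ hF hx), Finset.mem_univ _⟩) hne
    exact ⟨x, hx, by rw [← hE x (hF hx)]; exact h⟩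
  -- a set missing the sink and meeting the complement of `W` has a boundary edge off `W`
  have hbd : ∀ F : Finset α, G.sink ∉ F → ∀ x ∈ F, x ∉ W → ∃ u ∈ F, u ∉ W ∧
      ∃ v, v ∉ F ∧ 0 < G.b u v := by
    intro F hs x hx hxW
    have hr := hconn x hxW G.sink hWs
    induction hr using Relation.ReflTransGen.head_induction_on with
    | refl => exact absurd hx hs
    | head h1 hrest ih =>
      rename_i u w
      by_cases hw : w ∈ F
      · exact ih hw h1.2.1
      · exact ⟨u, hx, hxW, w, hw, h1.2.2⟩
  have hpos : ∀ x, x ≠ G.sink → x ∉ W → 0 < G.deg x := by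
    intro x hx hxW
    obtain ⟨u, hu, _, v, _, hb⟩ := hbd {x} (by simpa using Ne.symm hx) x (by simp) hxW
    rw [Finset.mem_singleton] at hu
    subst hu
    exact lt_of_lt_of_le hb (Finset.single_le_sum (f := fun y => G.b u y)
      (fun _ _ => Nat.zero_le _) (Finset.mem_univ v))
  -- extension by maximal values off `W`
  have hext : ∀ ζ : α → ℕ, (∀ x ∈ W, ζ x < G.deg x) → (∀ x, x ∉ W → ζ x = G.deg x - 1) →
      (∀ F ⊆ W, F.Nonempty → ∃ x ∈ F, G.degIn F x ≤ ζ x) → G.Recurrent ζ := by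
    intro ζ h1 h2 h3
    refine ⟨?_, ?_⟩
    · intro x hx
      by_cases hxW : x ∈ W
      · exact h1 x hxW
      · have := hpos x (Finset.mem_erase.1 hx).1 hxW
        rw [h2 x hxW]
        omega
    · intro F hF hne
      by_cases hFW : F ⊆ W
      · exact h3 F hFW hne
      · obtain ⟨x, hx, hxW⟩ := Finset.not_subset.1 hFW
        obtain ⟨u, hu, huW, v, hv, hb⟩ := hbd F
          (fun h => (Finset.mem_erase.1 (hF h)).1 rfl) x hx hxW
        refine ⟨u, hu, ?_⟩
        rw [h2 u huW]
        have h4 : G.degIn (insert v F) u ≤ G.deg u :=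
          Finset.sum_le_sum_of_subset (Finset.subset_univ _)
        have h5 : G.degIn (insert v F) u = G.b u v + G.degIn F u := by
          unfold Graph.degIn
          rw [Finset.sum_insert hv]
        omega
  apply chain_of_min hG _ W rfl hamp
  intro w hw h1 hcon
  let η : α → ℕ := fun x => if x ∈ W then ξ x else G.deg x - 1
  have hηW : ∀ x ∈ W, η x = ξ x := fun x hx => if_pos hx
  have hηW' : ∀ x, x ∉ W → η x = G.deg x - 1 := fun x hx => if_neg hx
  have hsub : ∀ x ∈ W, Graph.SubOne η w x = Graph.SubOne ξ w x := by
    intro x hx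
    simp only [Graph.SubOne, hηW x hx]
  refine hmin.2 η (hext η ?_ hηW' ?_) hηW w hw ⟨by rw [hηW w hw]; exact h1,
    hext _ ?_ ?_ ?_⟩
  · intro x hx; rw [hηW x hx]; exact hstable x hx
  · intro F hF hne
    obtain ⟨x, hx, h⟩ := hamp F hF hne
    exact ⟨x, hx, by rw [hηW x (hF hx)]; exact h⟩
  · intro x hx
    rw [hsub x hx]
    have := hstable x hx
    simp only [Graph.SubOne]
    split_ifs <;> omega
  · intro x hx
    simp only [Graph.SubOne, if_neg (fun h : x = w => hx (h ▸ hw))]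
    exact hηW' x hx
  · intro F hF hne
    obtain ⟨x, hx, h⟩ := hcon F hF hne
    exact ⟨x, hx, by rw [hsub x (hF hx)]; exact h⟩

/-- edges not touching `W` -/
noncomputable def E0 (G : Graph α) (W : Finset α) : Finset (Sym2 α × ℕ) :=
  (EG G).filter (fun p => ∀ w ∈ W, w ∉ p.1)

lemma dg_E0 {G : Graph α} (hG : G.IsSandpileGraph) {W F : Finset α} {x : α} (hx : x ∉ W)
    (hF : ∀ y ∈ F, y ∉ W) : dg (E0 G W) F x = G.degIn F x := by
  unfold dg Graph.degIn
  refine Finset.sum_congr rfl fun y hy => cnt_of_subset hG x y fun k => ?_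
  unfold E0
  rw [Finset.mem_filter, and_iff_left]
  intro w hw
  simp only [Sym2.mem_iff, not_or]
  exact ⟨fun h => hx (h ▸ hw), fun h => hF y hy (h ▸ hw)⟩

lemma dg_E0_univ {G : Graph α} (hG : G.IsSandpileGraph) {W : Finset α} {x : α} (hx : x ∉ W) :
    dg (E0 G W) Finset.univ x + G.degIn W x = G.deg x := by
  have h1 : dg (E0 G W) Finset.univ x = dg (E0 G W) (Finset.univ \ W) x := by
    unfold dg
    symm
    apply Finset.sum_subset (Finset.subset_univ _)
    intro y _ hy
    have hy : y ∈ W := by simpa using hy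
    unfold cnt
    rw [Finset.card_eq_zero, Finset.filter_eq_empty_iff]
    intro p hp hpe
    exact (Finset.mem_filter.1 hp).2 y hy (by rw [hpe]; simp)
  rw [h1, dg_E0 hG hx (by simp)]
  unfold Graph.degIn Graph.deg
  exact Finset.sum_sdiff (Finset.subset_univ W)

lemma rec_count {G : Graph α} (hG : G.IsSandpileGraph) {W : Finset α} (hWs : G.sink ∉ W)
    {ξ : α → ℕ} (hstable : ∀ x ∈ W, ξ x < G.deg x) (hch : Chain G ξ W) :
    {η : α → ℕ | η G.sink = 0 ∧ G.Recurrent η ∧ Graph.EqOn η ξ W}.ncard =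
      (RecSet (E0 G W) (insert G.sink W)).ncard := by
  set f : (α → ℕ) → (α → ℕ) := fun η x =>
    if x = G.sink then 0 else if x ∈ W then ξ x else η x + G.degIn W x with hf
  have hfs : ∀ η, f η G.sink = 0 := fun η => by simp [hf]
  have hfW : ∀ η, ∀ x ∈ W, f η x = ξ x := fun η x hx => by
    simp [hf, hx, show x ≠ G.sink from fun h => hWs (h ▸ hx)]
  have hfo : ∀ η x, x ≠ G.sink → x ∉ W → f η x = η x + G.degIn W x := fun η x h1 h2 => by
    simp [hf, h1, h2]
  have hdeg : ∀ F : Finset α, (∀ x ∈ F, x ∉ W) → ∀ x ∈ F,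
      G.degIn (F ∪ W) x = dg (E0 G W) F x + G.degIn W x := by
    intro F hF x hx
    rw [dg_E0 hG (hF x hx) hF]
    unfold Graph.degIn
    exact Finset.sum_union (Finset.disjoint_left.2 hF)
  have hinj : Set.InjOn f (RecSet (E0 G W) (insert G.sink W)) := by
    intro η hη η' hη' h
    funext x
    by_cases hx : x ∈ insert G.sink W
    · rw [hη.1 x hx, hη'.1 x hx]
    · have h1 := congrFun h x
      rw [Finset.mem_insert, not_or] at hx
      rw [hfo _ _ hx.1 hx.2, hfo _ _ hx.1 hx.2] at h1
      omega
  rw [← hinj.ncard_image]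
  congr 1
  ext η
  simp only [Set.mem_ofPred_eq, Set.mem_image]
  constructor
  · rintro ⟨h0, hrec, hE⟩
    rw [recurrent_iff, RU_chain hG hch hWs hE] at hrec
    obtain ⟨hst, hR⟩ := hrec
    have hge : ∀ x, x ≠ G.sink → x ∉ W → G.degIn W x ≤ η x := by
      intro x h1 h2
      obtain ⟨y, hy, hle⟩ := hR {x} ⟨x, by simp⟩ (by simp [h1, h2])
      rw [Finset.mem_singleton] at hy
      subst hy
      exact (degIn_mono G Finset.subset_union_right _).trans hle
    obtain ⟨ζ, hζ0, hζ⟩ : ∃ ζ : α → ℕ, (∀ x ∈ insert G.sink W, ζ x = 0) ∧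
        ∀ x, x ∉ insert G.sink W → ζ x = η x - G.degIn W x :=
      ⟨fun x => if x ∈ insert G.sink W then 0 else η x - G.degIn W x,
        fun x hx => if_pos hx, fun x hx => if_neg hx⟩
    refine ⟨ζ, ⟨hζ0, ?_, ?_⟩, ?_⟩
    · intro x hx
      rw [hζ x hx]
      rw [Finset.mem_insert, not_or] at hx
      have h1 := dg_E0_univ hG hx.2
      have h2 := hst x hx.1
      have h3 := hge x hx.1 hx.2
      omega
    · intro F hF hFS
      have hFS' : ∀ x ∈ F, x ≠ G.sink ∧ x ∉ W := fun x hx => by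
        have := hFS x hx
        rwa [Finset.mem_insert, not_or] at this
      obtain ⟨x, hx, hle⟩ := hR F hF hFS'
      refine ⟨x, hx, ?_⟩
      rw [hdeg F (fun y hy => (hFS' y hy).2) x hx] at hle
      rw [hζ x (hFS x hx)]
      omega
    · funext x
      by_cases hxs : x = G.sink
      · rw [hxs]; exact (hfs _).trans h0.symm
      · by_cases hxW : x ∈ W
        · exact (hfW _ x hxW).trans (hE x hxW).symm
        · refine (hfo _ x hxs hxW).trans ?_
          have := hge x hxs hxW
          rw [hζ x (by simp [hxs, hxW])]
          omega
  · rintro ⟨η, hη, rfl⟩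
    refine ⟨hfs η, ?_, fun x hx => hfW η x hx⟩
    rw [recurrent_iff, RU_chain hG hch hWs (hfW η)]
    refine ⟨?_, ?_⟩
    · intro x hx
      by_cases hxW : x ∈ W
      · rw [hfW η x hxW]; exact hstable x hxW
      · rw [hfo η x hx hxW, ← dg_E0_univ hG hxW]
        have := hη.2.1 x (by simp [hx, hxW])
        omega
    · intro F hF hFS
      obtain ⟨x, hx, hle⟩ := hη.2.2 F hF (by
        intro x hx
        rw [Finset.mem_insert, not_or]
        exact hFS x hx)
      refine ⟨x, hx, ?_⟩
      rw [hdeg F (fun y hy => (hFS y hy).2) x hx, hfo η x (hFS x hx).1 (hFS x hx).2]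
      omega

end Final

end SPProof

/-- For a minimal configuration `ξ` on `W`, there is a set `𝓔` of
edges touching `W` such that the number of recurrent sandpiles restricting to `ξ`
on `W` equals the number of spanning trees of `G` avoiding `𝓔`. -/
theorem statement_1 {α : Type*} [Fintype α] [DecidableEq α] (G : Sandpile.Graph α)
    (hG : G.IsSandpileGraph) (W : Finset α) (hWne : W.Nonempty) (hWs : G.sink ∉ W)
    (hconn : G.ConnectedOn {x : α | x ∉ W}) (ξ : α → ℕ)
    (hstable : ∀ x ∈ W, ξ x < G.deg x) (hmin : G.Minimal W ξ) :
    ∃ 𝓔 : Finset (Sym2 α × ℕ),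
      (∀ p ∈ 𝓔, ∃ x y : α, p.1 = s(x, y) ∧ p.2 < G.b x y ∧ (x ∈ W ∨ y ∈ W)) ∧
      Nat.card {η : α → ℕ // η G.sink = 0 ∧ G.Recurrent η ∧ Graph.EqOn η ξ W} =
        Nat.card {t : Finset (Sym2 α × ℕ) // G.IsSpanningTree t ∧ ∀ p ∈ 𝓔, p ∉ t} := by
  have hch := SPProof.chain_W hG hWs hconn hstable hmin
  obtain ⟨K, hK1, hK2⟩ := SPProof.tree_chain hG hch hWs hstable
  refine ⟨(SPProof.EG G \ SPProof.E0 G W) \ K, ?_, ?_⟩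
  · intro p hp
    simp only [SPProof.E0, Finset.mem_sdiff, Finset.mem_filter, not_and, not_forall,
      not_not] at hp
    obtain ⟨⟨h1, h2⟩, _⟩ := hp
    obtain ⟨w, hw, hwp⟩ := h2 h1
    obtain ⟨x, y, hxy, hb⟩ := (SPProof.mem_EG G p).1 h1
    refine ⟨x, y, hxy, hb, ?_⟩
    rw [hxy, Sym2.mem_iff] at hwp
    rcases hwp with rfl | rfl
    · exact Or.inl hw
    · exact Or.inr hw
  · have hset : SPProof.EG G \ ((SPProof.EG G \ SPProof.E0 G W) \ K) = SPProof.E0 G W ∪ K := by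
      ext p
      have h1 : p ∈ SPProof.E0 G W → p ∈ SPProof.EG G := fun h => (Finset.mem_filter.1 h).1
      have h2 : p ∈ K → p ∈ SPProof.EG G := fun h => (hK1 p h).1
      simp only [Finset.mem_sdiff, Finset.mem_union]
      tauto
    have h1 := SPProof.rec_count hG hWs hstable hch
    rw [SPProof.rec_eq_tree _ _ _ rfl, ← hK2 (SPProof.E0 G W)
      (fun u hu p hp => (Finset.mem_filter.1 hp).2 u hu), ← hset] at h1
    simp only [SPProof.spanningTree_iff]
    exact h1
end
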